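/- arXiv:1912.10996 — 4 statements merged into one kernel-verified Lean document; each statement's English description precedes it below -/
import Mathlib

section
/- Let 0 < α < 2 and β > α be real numbers with β − α not equal to a nonpositive integer shifted pole configuration, i.e. β > α so that Γ(β − α) > 0. Then Γ(β − α) · x · E_{α,β}(−x) → 1 as x → ∞ (x real, x > 0). In other words, the scaled function 𝔈_{α,β}(x) = Γ(β − α) x E_{α,β}(−x) has asymptotic value 1 at infinity. -/
open Complex in
theorem ml_gamma_mono (σ σ' τ : ℝ) (h0 : 0 < σ) (h : σ ≤ σ') :
    ‖Gamma (σ + τ * I)‖ * ‖Gamma (σ' : ℂ)‖ ≤ ‖Gamma (σ' + τ * I)‖ * ‖Gamma (σ : ℂ)‖ := by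
  have t := fun z => (GammaSeq_tendsto_Gamma z).norm
  refine le_of_tendsto_of_tendsto ((t (σ + τ * I)).mul (t σ')) ((t (σ' + τ * I)).mul (t σ)) ?_
  filter_upwards [Filter.eventually_gt_atTop 0] with n hn
  have hn' : (0:ℝ) < n := by exact_mod_cast hn
  have e : ∀ z : ℂ, ‖GammaSeq z n‖ = (n:ℝ) ^ z.re * (n.factorial : ℝ) / ∏ j ∈ Finset.range (n+1), ‖z + j‖ := by
    intro z
    have : ‖(n:ℂ)^z‖ = (n:ℝ)^z.re := by
      have := Complex.norm_cpow_eq_rpow_re_of_pos hn' z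
      simpa using this
    simp [GammaSeq, norm_prod, this]
  have pos : ∀ (s t : ℝ), 0 < s → ∀ j : ℕ, 0 < ‖(s + t * I : ℂ) + j‖ := by
    intro s t hs j
    rw [norm_pos_iff]
    intro h
    have := congrArg Complex.re h
    simp at this
    have : (0:ℝ) ≤ j := by positivity
    linarith
  have h0' : 0 < σ' := by linarith
  have P : ∀ (s t : ℝ), 0 < s → 0 < ∏ j ∈ Finset.range (n+1), ‖(s + t * I : ℂ) + j‖ := by
    intro s t hs
    exact Finset.prod_pos fun j _ => pos s t hs j
  have key : (∏ j ∈ Finset.range (n+1), ‖(σ' + τ * I : ℂ) + j‖) * (∏ j ∈ Finset.range (n+1), ‖(σ : ℂ) + j‖)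
     ≤ (∏ j ∈ Finset.range (n+1), ‖(σ + τ * I : ℂ) + j‖) * (∏ j ∈ Finset.range (n+1), ‖(σ' : ℂ) + j‖) := by
    rw [← Finset.prod_mul_distrib, ← Finset.prod_mul_distrib]
    refine Finset.prod_le_prod (fun j _ => by positivity) fun j _ => ?_
    have hj : (0:ℝ) ≤ j := by positivity
    have r : ∀ s t : ℝ, ‖(s + t * I : ℂ) + j‖ = √((s + j)^2 + t^2) := by
      intro s t
      rw [← Complex.norm_add_mul_I]; congr 1; push_cast; ring
    have r' : ∀ s : ℝ, ‖(s : ℂ) + j‖ = √((s + j)^2) := by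
      intro s
      have := r s 0
      simpa using this
    rw [r, r, r', r', ← Real.sqrt_mul (by positivity), ← Real.sqrt_mul (by positivity)]
    apply Real.sqrt_le_sqrt
    have : (σ + j)^2 ≤ (σ'+j)^2 := by gcongr
    nlinarith [mul_le_mul_of_nonneg_left this (sq_nonneg τ)]
  have p1 := P σ τ h0
  have p2 := P σ' τ h0'
  have p3 := P σ 0 h0
  have p4 := P σ' 0 h0'
  simp only [ofReal_zero, zero_mul, add_zero] at p3 p4
  rw [e, e, e, e, div_mul_div_comm, div_mul_div_comm]
  simp only [add_re, ofReal_re, mul_re, I_re, mul_zero, ofReal_im, I_im, zero_mul, sub_zero, add_zero, sub_self]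
  have : (n:ℝ) ^ σ * (n.factorial : ℝ) * ((n:ℝ) ^ σ' * (n.factorial : ℝ)) = (n:ℝ) ^ σ' * (n.factorial : ℝ) * ((n:ℝ) ^ σ * (n.factorial : ℝ)) := by ring
  rw [this]
  exact div_le_div_of_nonneg_left (by positivity) (by positivity) key

open Complex in
theorem ml_gamma_half (τ : ℝ) : ‖Gamma (((1/2:ℝ):ℂ) + τ * I)‖ ^ 2 * Real.cosh (Real.pi * τ) = Real.pi := by
  have h := Complex.Gamma_mul_Gamma_one_sub (((1/2:ℝ):ℂ) + τ * I)
  have c : (1 : ℂ) - (((1/2:ℝ):ℂ) + τ * I) = (starRingEnd ℂ) (((1/2:ℝ):ℂ) + τ * I) := by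
    simp [conj_ofNat]; ring
  rw [c, Complex.Gamma_conj, Complex.mul_conj, Complex.normSq_eq_norm_sq] at h
  have s : Complex.sin (Real.pi * (((1/2:ℝ):ℂ) + τ * I)) = (Real.cosh (Real.pi * τ) : ℝ) := by
    have : (Real.pi * (((1/2:ℝ):ℂ) + τ * I) : ℂ) = (Real.pi * τ : ℂ) * I + Real.pi/2 := by push_cast; ring
    rw [this, Complex.sin_add_pi_div_two, Complex.cos_mul_I]; push_cast; rfl
  rw [s] at h
  have h' : ‖Gamma (((1/2:ℝ):ℂ) + τ * I)‖ ^ 2 = Real.pi / Real.cosh (Real.pi * τ) := by exact_mod_cast h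
  rw [h']
  have := Real.cosh_pos (Real.pi * τ)
  field_simp

open Complex in
theorem ml_gamma_lower1 (σ τ : ℝ) (h : 1/2 ≤ σ) :
    Real.Gamma σ ≤ ‖Gamma (σ + τ * I)‖ * Real.exp (Real.pi / 2 * |τ|) := by
  have m := ml_gamma_mono (1/2) σ τ (by norm_num) h
  have hh := ml_gamma_half τ
  have g : ∀ s : ℝ, 0 < s → ‖Gamma (s : ℂ)‖ = Real.Gamma s := by
    intro s hs
    rw [Complex.Gamma_ofReal, Complex.norm_real, Real.norm_of_nonneg (Real.Gamma_pos_of_pos hs).le]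
  rw [g _ (by linarith), g _ (by norm_num), Real.Gamma_one_half_eq] at m
  set a := ‖Gamma (((1/2:ℝ):ℂ) + τ * I)‖ with ha
  have ha0 : 0 ≤ a := norm_nonneg _
  have hc : Real.cosh (Real.pi * τ) ≤ Real.exp (Real.pi / 2 * |τ|) ^ 2 := by
    rw [← Real.exp_nat_mul, ← Real.cosh_abs, abs_mul, abs_of_pos Real.pi_pos, Real.cosh_eq]
    have : Real.exp (-(Real.pi * |τ|)) ≤ Real.exp (Real.pi * |τ|) := by
      apply Real.exp_le_exp.2
      have : 0 ≤ Real.pi * |τ| := by positivity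
      linarith
    have e : ((2:ℕ):ℝ) * (Real.pi / 2 * |τ|) = Real.pi * |τ| := by push_cast; ring
    rw [e]; linarith
  have h1 : √Real.pi ≤ a * Real.exp (Real.pi / 2 * |τ|) := by
    apply Real.sqrt_le_iff.2
    refine ⟨by positivity, ?_⟩
    rw [mul_pow]
    calc Real.pi = a ^ 2 * Real.cosh (Real.pi * τ) := hh.symm
      _ ≤ _ := by gcongr
  have hp : 0 < √Real.pi := Real.sqrt_pos.2 Real.pi_pos
  have hG : 0 < Real.Gamma σ := Real.Gamma_pos_of_pos (by linarith)
  have : √Real.pi * Real.Gamma σ ≤ √Real.pi * (‖Gamma (σ + τ * I)‖ * Real.exp (Real.pi / 2 * |τ|)) := by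
    calc _ ≤ a * Real.exp (Real.pi / 2 * |τ|) * Real.Gamma σ := by gcongr
      _ = (a * Real.Gamma σ) * Real.exp (Real.pi / 2 * |τ|) := by ring
      _ ≤ (‖Gamma (σ + τ * I)‖ * √Real.pi) * Real.exp (Real.pi / 2 * |τ|) := by gcongr
      _ = _ := by ring
  exact le_of_mul_le_mul_left this hp

open Complex in
theorem ml_gamma_lower2 (σ τ : ℝ) (h : 0 < σ) :
    Real.Gamma σ ≤ (1 + |τ| / σ) * ‖Gamma (σ + τ * I)‖ * Real.exp (Real.pi / 2 * |τ|) := by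
  have m := ml_gamma_lower1 (σ + 1) τ (by linarith)
  rw [Real.Gamma_add_one h.ne'] at m
  have hz : (σ + τ * I : ℂ) ≠ 0 := by
    intro h'
    have := congrArg Complex.re h'
    simp at this
    linarith
  have e : (((σ + 1 : ℝ) : ℂ) + τ * I) = (σ + τ * I) + 1 := by push_cast; ring
  rw [e, Complex.Gamma_add_one _ hz, norm_mul] at m
  have n : ‖(σ + τ * I : ℂ)‖ ≤ σ + |τ| := by
    refine (norm_add_le _ _).trans ?_
    simp [abs_of_pos h]
  refine le_of_mul_le_mul_left (m.trans ?_) h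
  calc _ ≤ (σ + |τ|) * ‖Gamma (σ + τ * I)‖ * Real.exp (Real.pi / 2 * |τ|) := by gcongr
    _ = _ := by field_simp

open Complex in
theorem ml_gamma_lower3 (σ₀ c : ℝ) (h0 : 0 < σ₀) (hc : Real.pi / 2 < c) :
    ∃ C : ℝ, 0 < C ∧ ∀ σ τ : ℝ, σ₀ ≤ σ →
      ‖(Gamma (σ + τ * I))⁻¹‖ ≤ C * (Real.exp (c * |τ|) / Real.Gamma σ) := by
  set d := c - Real.pi / 2 with hd
  have hd0 : 0 < d := by linarith
  refine ⟨1 + 1 / (σ₀ * d), by positivity, fun σ τ h => ?_⟩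
  have hs : 0 < σ := by linarith
  have m := ml_gamma_lower2 σ τ hs
  have hG := Real.Gamma_pos_of_pos hs
  have hg : 0 < ‖Gamma (σ + τ * I)‖ := by
    rw [norm_pos_iff]
    apply Complex.Gamma_ne_zero_of_re_pos
    simpa using hs
  have k : (1 + |τ| / σ) ≤ (1 + 1 / (σ₀ * d)) * Real.exp (d * |τ|) := by
    have e1 := Real.add_one_le_exp (d * |τ|)
    have e2 : 1 ≤ Real.exp (d * |τ|) := Real.one_le_exp (by positivity)
    have : |τ| / σ ≤ 1 / (σ₀ * d) * (d * |τ|) := by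
      calc _ ≤ |τ| / σ₀ := by gcongr
        _ = _ := by field_simp
    calc 1 + |τ| / σ ≤ Real.exp (d * |τ|) + 1 / (σ₀ * d) * (d * |τ|) := by linarith
      _ ≤ Real.exp (d * |τ|) + 1 / (σ₀ * d) * Real.exp (d * |τ|) := by gcongr; linarith
      _ = _ := by ring
  have e3 : Real.exp (c * |τ|) = Real.exp (d * |τ|) * Real.exp (Real.pi / 2 * |τ|) := by
    rw [← Real.exp_add, hd]; ring_nf
  rw [norm_inv, inv_le_iff_one_le_mul₀ hg, e3]
  calc 1 = Real.Gamma σ / Real.Gamma σ := by field_simp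
    _ ≤ ((1 + |τ| / σ) * ‖Gamma (σ + τ * I)‖ * Real.exp (Real.pi / 2 * |τ|)) / Real.Gamma σ := by gcongr
    _ ≤ (((1 + 1 / (σ₀ * d)) * Real.exp (d * |τ|)) * ‖Gamma (σ + τ * I)‖ * Real.exp (Real.pi / 2 * |τ|)) / Real.Gamma σ := by gcongr
    _ = _ := by ring

open Complex in
theorem ml_sin_lower1 (σ t : ℝ) : |Real.sin (Real.pi * σ)| * Real.cosh (Real.pi * t) ≤
    ‖Complex.sin (Real.pi * (σ + t * I))‖ := by
  have e : (Real.pi * (σ + t * I) : ℂ) = ((Real.pi * σ : ℝ) : ℂ) + ((Real.pi * t : ℝ) : ℂ) * I := by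
    push_cast; ring
  have := Complex.abs_re_le_norm (Complex.sin (Real.pi * (σ + t * I)))
  refine le_trans (le_of_eq ?_) this
  rw [e, Complex.sin_add_mul_I, ← ofReal_sin, ← ofReal_cos, ← ofReal_sinh, ← ofReal_cosh]
  simp only [← ofReal_mul, add_re, ofReal_re, re_ofReal_mul, I_re, mul_zero, add_zero]
  rw [abs_mul, abs_of_pos (Real.cosh_pos _)]

open Complex in
theorem ml_sin_lower2 (σ t : ℝ) : |Real.sinh (Real.pi * t)| ≤
    ‖Complex.sin (Real.pi * (σ + t * I))‖ := by
  have e : (Real.pi * (σ + t * I) : ℂ) = ((Real.pi * σ : ℝ) : ℂ) + ((Real.pi * t : ℝ) : ℂ) * I := by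
    push_cast; ring
  rw [e, Complex.sin_add_mul_I, ← ofReal_sin, ← ofReal_cos, ← ofReal_sinh, ← ofReal_cosh]
  rw [← ofReal_mul, ← ofReal_mul, Complex.norm_add_mul_I]
  apply Real.abs_le_sqrt
  have h1 := Real.cosh_sq (Real.pi * t)
  have h2 := Real.sin_sq_add_cos_sq (Real.pi * σ)
  rw [mul_pow, mul_pow, h1]
  nlinarith [sq_nonneg (Real.sin (Real.pi * σ))]

theorem ml_cosh_lower (u : ℝ) : Real.exp |u| / 2 ≤ Real.cosh u := by
  rw [← Real.cosh_abs, Real.cosh_eq]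
  have := Real.exp_pos (-|u|)
  linarith

theorem ml_sinh_lower (u : ℝ) (h : 1 ≤ |u|) : Real.exp |u| / 4 ≤ |Real.sinh u| := by
  rw [Real.abs_sinh, Real.sinh_eq]
  have e1 := Real.add_one_le_exp |u|
  have : Real.exp (-|u|) ≤ Real.exp |u| / 2 := by
    rw [Real.exp_neg, inv_le_iff_one_le_mul₀ (Real.exp_pos _)]
    nlinarith
  linarith

open Complex in
theorem ml_sin_inv1 (δ t : ℝ) (h0 : 0 < δ) (h1 : δ < 1) :
    ‖(Complex.sin (Real.pi * (((-δ : ℝ) : ℂ) + t * I)))⁻¹‖ ≤ 2 / Real.sin (Real.pi * δ) * Real.exp (-(Real.pi * |t|)) := by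
  have hs : 0 < Real.sin (Real.pi * δ) := by
    apply Real.sin_pos_of_pos_of_lt_pi
    · positivity
    · nlinarith [Real.pi_pos]
  have a := ml_sin_lower1 (-δ) t
  rw [mul_neg, Real.sin_neg, abs_neg, abs_of_pos hs] at a
  have b := ml_cosh_lower (Real.pi * t)
  rw [abs_mul, abs_of_pos Real.pi_pos] at b
  rw [norm_inv, Real.exp_neg]
  calc _ ≤ (Real.sin (Real.pi * δ) * (Real.exp (Real.pi * |t|) / 2))⁻¹ := by
        gcongr
        exact le_trans (by gcongr) a
    _ = _ := by field_simp

open Complex in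
theorem ml_sin_inv2 (σ t : ℝ) (h1 : 1 ≤ |t|) :
    ‖(Complex.sin (Real.pi * (σ + t * I)))⁻¹‖ ≤ 4 * Real.exp (-(Real.pi * |t|)) := by
  have a := ml_sin_lower2 σ t
  have b := ml_sinh_lower (Real.pi * t)
  rw [abs_mul, abs_of_pos Real.pi_pos] at b
  have b := b (by nlinarith [Real.pi_gt_three])
  rw [norm_inv, Real.exp_neg]
  calc _ ≤ ((Real.exp (Real.pi * |t|) / 4))⁻¹ := by
        gcongr
        exact le_trans b a
    _ = _ := by field_simp

theorem ml_integrable_exp (a : ℝ) (ha : 0 < a) :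
    MeasureTheory.Integrable (fun t : ℝ => Real.exp (-(a * |t|))) := by
  have h1 : MeasureTheory.IntegrableOn (fun t : ℝ => Real.exp (-(a * |t|))) (Set.Ioi 0) := by
    refine (exp_neg_integrableOn_Ioi 0 ha).congr_fun (fun t ht => ?_) measurableSet_Ioi
    simp [abs_of_pos (Set.mem_Ioi.1 ht)]
  have h2 : MeasureTheory.IntegrableOn (fun t : ℝ => Real.exp (-(a * |t|))) (Set.Iic 0) := by
    have := (integrableOn_Ici_iff_integrableOn_Ioi (μ := MeasureTheory.volume)).2 h1
    have := MeasureTheory.IntegrableOn.comp_neg_Iic (c := (0:ℝ)) (f := (fun t : ℝ => Real.exp (-(a * |t|)))) (by simpa using this)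
    simpa using this
  rw [← MeasureTheory.integrableOn_univ, ← Set.Iic_union_Ioi (a := (0:ℝ))]
  exact h2.union h1


/-- The weighted vertical line integral at real part `-δ`. -/
noncomputable def mlL (δ : ℝ) (h : ℂ → ℂ) : ℂ :=
  ∫ t : ℝ, h (((-δ : ℝ) : ℂ) + t * Complex.I) *
    (Complex.sin (Real.pi * (((-δ : ℝ) : ℂ) + t * Complex.I)))⁻¹

theorem ml_sin_ne (δ t : ℝ) (h0 : 0 < δ) (h1 : δ < 1) :
    Complex.sin (Real.pi * (((-δ : ℝ) : ℂ) + t * Complex.I)) ≠ 0 := by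
  have hs : 0 < Real.sin (Real.pi * δ) := by
    apply Real.sin_pos_of_pos_of_lt_pi
    · positivity
    · nlinarith [Real.pi_pos]
  have a := ml_sin_lower1 (-δ) t
  rw [mul_neg, Real.sin_neg, abs_neg, abs_of_pos hs] at a
  rw [← norm_pos_iff]
  exact lt_of_lt_of_le (mul_pos hs (Real.cosh_pos _)) a

theorem ml_pointwise (δ κ K : ℝ) (h0 : 0 < δ) (h1 : δ < 1) (t : ℝ) (v : ℂ)
    (hv : ‖v‖ ≤ K * Real.exp (κ * |t|)) :
    ‖v * (Complex.sin (Real.pi * (((-δ : ℝ) : ℂ) + t * Complex.I)))⁻¹‖ ≤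
      K * (2 / Real.sin (Real.pi * δ)) * Real.exp (-((Real.pi - κ) * |t|)) := by
  rw [norm_mul]
  have hs := ml_sin_inv1 δ t h0 h1
  calc _ ≤ (K * Real.exp (κ * |t|)) * (2 / Real.sin (Real.pi * δ) * Real.exp (-(Real.pi * |t|))) :=
        mul_le_mul hv hs (norm_nonneg _) ((norm_nonneg _).trans hv)
    _ = K * (2 / Real.sin (Real.pi * δ)) * (Real.exp (κ * |t|) * Real.exp (-(Real.pi * |t|))) := by ring
    _ = _ := by rw [← Real.exp_add]; ring_nf

theorem ml_integrable (δ κ K : ℝ) (h0 : 0 < δ) (h1 : δ < 1) (hκ : κ < Real.pi) (h : ℂ → ℂ)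
    (hc : Continuous h)
    (hb : ∀ t : ℝ, ‖h (((-δ : ℝ) : ℂ) + t * Complex.I)‖ ≤ K * Real.exp (κ * |t|)) :
    MeasureTheory.Integrable (fun t : ℝ => h (((-δ : ℝ) : ℂ) + t * Complex.I) *
      (Complex.sin (Real.pi * (((-δ : ℝ) : ℂ) + t * Complex.I)))⁻¹) := by
  refine ((ml_integrable_exp (Real.pi - κ) (by linarith)).const_mul
    (K * (2 / Real.sin (Real.pi * δ)))).mono' ?_ ?_
  · apply Continuous.aestronglyMeasurable
    refine Continuous.mul (by fun_prop) (Continuous.inv₀ (by fun_prop) fun t => ml_sin_ne δ t h0 h1)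
  · exact Filter.Eventually.of_forall fun t => ml_pointwise δ κ K h0 h1 t _ (hb t)

theorem ml_L_bound (δ κ K : ℝ) (h0 : 0 < δ) (h1 : δ < 1) (hκ : κ < Real.pi) (h : ℂ → ℂ)
    (hb : ∀ t : ℝ, ‖h (((-δ : ℝ) : ℂ) + t * Complex.I)‖ ≤ K * Real.exp (κ * |t|)) :
    ‖mlL δ h‖ ≤ K * ((2 / Real.sin (Real.pi * δ)) * ∫ t : ℝ, Real.exp (-((Real.pi - κ) * |t|))) := by
  have := MeasureTheory.norm_integral_le_of_norm_le
    ((ml_integrable_exp (Real.pi - κ) (by linarith)).const_mul (K * (2 / Real.sin (Real.pi * δ))))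
    (Filter.Eventually.of_forall fun t => ml_pointwise δ κ K h0 h1 t _ (hb t))
  rw [MeasureTheory.integral_const_mul, mul_assoc] at this
  exact this

theorem ml_L_one_ne (δ : ℝ) (h0 : 0 < δ) (h1 : δ < 1) : mlL δ (fun _ => 1) ≠ 0 := by
  have hs : 0 < Real.sin (Real.pi * δ) := by
    apply Real.sin_pos_of_pos_of_lt_pi
    · positivity
    · nlinarith [Real.pi_pos]
  have hi := ml_integrable δ 0 1 h0 h1 Real.pi_pos (fun _ => 1) continuous_const (by simp)
  intro hz
  have hre := hi.re
  have e : ∫ t : ℝ, RCLike.re ((1:ℂ) * (Complex.sin (Real.pi * (((-δ : ℝ) : ℂ) + t * Complex.I)))⁻¹) = 0 := by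
    have := integral_re hi
    rw [this]
    unfold mlL at hz
    rw [hz]; simp
  have neg : ∀ t : ℝ, 0 < -RCLike.re ((1:ℂ) * (Complex.sin (Real.pi * (((-δ : ℝ) : ℂ) + t * Complex.I)))⁻¹) := by
    intro t
    have hne := ml_sin_ne δ t h0 h1
    have e2 : (Real.pi * (((-δ : ℝ) : ℂ) + t * Complex.I) : ℂ) = ((Real.pi * (-δ) : ℝ) : ℂ) + ((Real.pi * t : ℝ) : ℂ) * Complex.I := by
      push_cast; ring
    have hr : (Complex.sin (Real.pi * (((-δ : ℝ) : ℂ) + t * Complex.I))).re = - (Real.sin (Real.pi * δ) * Real.cosh (Real.pi * t)) := by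
      rw [e2, Complex.sin_add_mul_I, ← Complex.ofReal_sin, ← Complex.ofReal_cos, ← Complex.ofReal_sinh, ← Complex.ofReal_cosh]
      simp only [← Complex.ofReal_mul, Complex.add_re, Complex.ofReal_re, Complex.re_ofReal_mul, Complex.I_re, mul_zero, add_zero]
      rw [mul_neg, Real.sin_neg, neg_mul]
    rw [one_mul, RCLike.re_eq_complex_re, Complex.inv_re, hr, neg_div, neg_neg]
    have := Real.cosh_pos (Real.pi * t)
    have := Complex.normSq_pos.2 hne
    positivity
  have hp : 0 < ∫ t : ℝ, -RCLike.re ((1:ℂ) * (Complex.sin (Real.pi * (((-δ : ℝ) : ℂ) + t * Complex.I)))⁻¹) := by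
    rw [MeasureTheory.integral_pos_iff_support_of_nonneg (fun t => (neg t).le) hre.neg]
    have : Function.support (fun t : ℝ => -RCLike.re ((1:ℂ) * (Complex.sin (Real.pi * (((-δ : ℝ) : ℂ) + t * Complex.I)))⁻¹)) = Set.univ := by
      ext t; simpa using (neg t).ne'
    rw [this]; simp
  rw [MeasureTheory.integral_neg, e] at hp
  simp at hp

open Complex in
theorem ml_shift (δ κ K : ℝ) (h0 : 0 < δ) (h1 : δ < 1) (hκ : κ < Real.pi) (h : ℂ → ℂ)
    (hd : Differentiable ℂ h) (hz : h 0 = 0)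
    (hb : ∀ σ t : ℝ, -δ ≤ σ → σ ≤ 1 - δ → ‖h ((σ : ℂ) + t * I)‖ ≤ K * Real.exp (κ * |t|)) :
    mlL δ (fun s => h (s + 1)) + mlL δ h = 0 := by
  let S : ℂ → ℂ := fun s => Complex.sin (Real.pi * s)
  have hS : Differentiable ℂ S := by
    intro s; fun_prop
  have hS0 : S 0 = 0 := by simp [S]
  have hSd : HasDerivAt S Real.pi 0 := by
    have := ((hasDerivAt_id (0:ℂ)).const_mul (Real.pi:ℂ)).csin
    simpa [S] using this
  have dd : ∀ f : ℂ → ℂ, Differentiable ℂ f → Differentiable ℂ (dslope f 0) := by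
    intro f hf
    rw [← differentiableOn_univ] at hf ⊢
    exact (Complex.differentiableOn_dslope Filter.univ_mem).2 hf
  let Q : ℂ → ℂ := fun s => dslope h 0 s / dslope S 0 s
  have hQ : ∀ s, s ≠ 0 → Q s = h s * (S s)⁻¹ := by
    intro s hs
    simp only [Q]
    rw [dslope_of_ne _ hs, dslope_of_ne _ hs, slope_def_field, slope_def_field, hz, hS0]
    field_simp
    simp
  have hne : ∀ s : ℂ, -1 < s.re → s.re < 1 → dslope S 0 s ≠ 0 := by
    intro s h1 h2
    by_cases hs : s = 0
    · rw [hs, dslope_same, hSd.deriv]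
      exact_mod_cast Real.pi_ne_zero
    · rw [dslope_of_ne _ hs, slope_def_field, hS0, sub_zero, sub_zero]
      refine div_ne_zero ?_ hs
      intro h'
      obtain ⟨k, hk⟩ := Complex.sin_eq_zero_iff.1 h'
      have : s = k := by
        have hp : (Real.pi : ℂ) ≠ 0 := by exact_mod_cast Real.pi_ne_zero
        apply mul_left_cancel₀ hp
        rw [hk]; ring
      rw [this] at h1 h2
      simp at h1 h2
      have a1 : -1 < k := by exact_mod_cast h1
      have a2 : k < 1 := by exact_mod_cast h2
      have : k = 0 := by omega
      subst this
      simp at *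
      contradiction
  have rect : ∀ T : ℝ, (((∫ (x : ℝ) in (-δ)..(1-δ), Q (x + ((-T : ℝ):ℂ) * I)) - ∫ (x : ℝ) in (-δ)..(1-δ), Q (x + (T:ℂ) * I)) +
          I • ∫ (y : ℝ) in (-T)..T, Q (((1 - δ : ℝ):ℂ) + y * I)) -
        I • ∫ (y : ℝ) in (-T)..T, Q (((-δ:ℝ):ℂ) + y * I) = 0 := by
    intro T
    have := Complex.integral_boundary_rect_eq_zero_of_differentiableOn Q (⟨-δ, -T⟩ : ℂ) ⟨1 - δ, T⟩ ?_
    · simpa using this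
    · intro s hs
      rw [Complex.mem_reProdIm, Set.uIcc_of_le (by simp)] at hs
      obtain ⟨⟨a1, a2⟩, -⟩ := hs
      simp at a1 a2
      exact ((dd h hd s).div (dd S hS s) (hne s (by linarith) (by linarith))).differentiableWithinAt
  have hv1 : ∀ t : ℝ, Q (((-δ:ℝ):ℂ) + t * I) = h (((-δ : ℝ) : ℂ) + t * I) * (Complex.sin (Real.pi * (((-δ : ℝ) : ℂ) + t * I)))⁻¹ := by
    intro t
    rw [hQ]
    intro h'
    have := congrArg Complex.re h'
    simp at this
    linarith
  have hv2 : ∀ t : ℝ, Q (((1-δ:ℝ):ℂ) + t * I) = -(h ((((-δ : ℝ) : ℂ) + t * I) + 1) * (Complex.sin (Real.pi * (((-δ : ℝ) : ℂ) + t * I)))⁻¹) := by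
    intro t
    have e : ((1-δ:ℝ):ℂ) + t * I = (((-δ : ℝ) : ℂ) + t * I) + 1 := by push_cast; ring
    rw [hQ, e]
    · simp only [S]
      rw [mul_add, mul_one, Complex.sin_add_pi, inv_neg, mul_neg]
    · intro h'
      have := congrArg Complex.re h'
      simp at this
      linarith
  have i1 := ml_integrable δ κ K h0 h1 hκ h hd.continuous (fun t => hb (-δ) t le_rfl (by linarith))
  have i2 := ml_integrable δ κ K h0 h1 hκ (fun s => h (s + 1)) (hd.continuous.comp (by fun_prop)) (fun t => by
    have := hb (1 - δ) t (by linarith) le_rfl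
    convert this using 3
    push_cast; ring)
  have t1 := MeasureTheory.intervalIntegral_tendsto_integral i1 Filter.tendsto_neg_atTop_atBot Filter.tendsto_id
  have t2 := MeasureTheory.intervalIntegral_tendsto_integral i2 Filter.tendsto_neg_atTop_atBot Filter.tendsto_id
  have K0 : 0 ≤ K := by
    have := (norm_nonneg _).trans (hb (-δ) 0 le_rfl (by linarith))
    simpa using this
  have hor : ∀ (x T : ℝ), 1 ≤ |T| → -δ ≤ x → x ≤ 1 - δ → ‖Q (x + (T:ℂ) * I)‖ ≤ 4 * K * Real.exp (-((Real.pi - κ) * |T|)) := by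
    intro x T hT hx1 hx2
    rw [hQ]
    · rw [norm_mul]
      calc _ ≤ (K * Real.exp (κ * |T|)) * (4 * Real.exp (-(Real.pi * |T|))) :=
            mul_le_mul (hb x T hx1 hx2) (ml_sin_inv2 x T hT) (norm_nonneg _) (by positivity)
        _ = 4 * K * (Real.exp (κ * |T|) * Real.exp (-(Real.pi * |T|))) := by ring
        _ = _ := by rw [← Real.exp_add]; ring_nf
    · intro h'
      have := congrArg Complex.im h'
      simp at this
      rw [this] at hT
      norm_num at hT
  have hor' : ∀ (T : ℝ), 1 ≤ |T| → ‖∫ (x : ℝ) in (-δ)..(1-δ), Q (x + (T:ℂ) * I)‖ ≤ 4 * K * Real.exp (-((Real.pi - κ) * |T|)) := by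
    intro T hT
    have := intervalIntegral.norm_integral_le_of_norm_le_const (a := -δ) (b := 1-δ) (f := fun x : ℝ => Q (x + (T:ℂ) * I))
      (C := 4 * K * Real.exp (-((Real.pi - κ) * |T|))) (fun x hx => by
        rw [Set.uIoc_of_le (by linarith)] at hx
        exact hor x T hT hx.1.le hx.2)
    simpa using this
  have dec : Filter.Tendsto (fun T : ℝ => 4 * K * Real.exp (-((Real.pi - κ) * T))) Filter.atTop (nhds 0) := by
    have : Filter.Tendsto (fun T : ℝ => Real.exp (-((Real.pi - κ) * T))) Filter.atTop (nhds 0) :=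
      Real.tendsto_exp_neg_atTop_nhds_zero.comp (Filter.tendsto_id.const_mul_atTop (by linarith))
    simpa using this.const_mul (4 * K)
  have z1 : Filter.Tendsto (fun T : ℝ => ∫ (x : ℝ) in (-δ)..(1-δ), Q (x + (T:ℂ) * I)) Filter.atTop (nhds 0) := by
    apply squeeze_zero_norm' _ dec
    filter_upwards [Filter.eventually_ge_atTop 1] with T hT
    have e : |T| = T := abs_of_nonneg (by linarith)
    have := hor' T (by rwa [e])
    rwa [e] at this
  have z2 : Filter.Tendsto (fun T : ℝ => ∫ (x : ℝ) in (-δ)..(1-δ), Q (x + ((-T : ℝ):ℂ) * I)) Filter.atTop (nhds 0) := by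
    apply squeeze_zero_norm' _ dec
    filter_upwards [Filter.eventually_ge_atTop 1] with T hT
    have e : |-T| = T := by rw [abs_neg]; exact abs_of_nonneg (by linarith)
    have := hor' (-T) (by rwa [e])
    rwa [e] at this
  simp only [hv1, hv2, intervalIntegral.integral_neg, smul_eq_mul] at rect
  have lim := ((z2.sub z1).add (t2.neg.const_mul I)).sub (t1.const_mul I)
  simp only [id] at lim
  have := tendsto_nhds_unique (lim.congr rect) tendsto_const_nhds
  have e : (0:ℂ) = I * (mlL δ (fun s => h (s + 1)) + mlL δ h) := by
    unfold mlL
    linear_combination this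
  have := e.symm
  simpa using this

theorem ml_recur (δ κ K : ℝ) (h0 : 0 < δ) (h1 : δ < 1) (hκ0 : 0 ≤ κ) (hκ : κ < Real.pi) (h : ℂ → ℂ)
    (hd : Differentiable ℂ h)
    (hb : ∀ σ t : ℝ, -δ ≤ σ → σ ≤ 1 - δ → ‖h ((σ : ℂ) + t * Complex.I)‖ ≤ K * Real.exp (κ * |t|)) :
    mlL δ h = 2 * mlL δ (fun _ => 1) * h 0 - mlL δ (fun s => h (s + 1)) := by
  have s := ml_shift δ κ (K + ‖h 0‖) h0 h1 hκ (fun s => h s - h 0) (hd.sub_const _) (sub_self _) (by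
    intro σ t a b
    have e : 1 ≤ Real.exp (κ * |t|) := Real.one_le_exp (by positivity)
    calc _ ≤ ‖h ((σ : ℂ) + t * Complex.I)‖ + ‖h 0‖ := norm_sub_le _ _
      _ ≤ K * Real.exp (κ * |t|) + ‖h 0‖ * Real.exp (κ * |t|) := by
        have := hb σ t a b
        nlinarith [norm_nonneg (h 0)]
      _ = _ := by ring)
  have i0 := ml_integrable δ 0 1 h0 h1 Real.pi_pos (fun _ => 1) continuous_const (by simp)
  have i1 := ml_integrable δ κ K h0 h1 hκ h hd.continuous (fun t => hb (-δ) t le_rfl (by linarith))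
  have i2 := ml_integrable δ κ K h0 h1 hκ (fun s => h (s + 1)) (hd.continuous.comp (by fun_prop)) (fun t => by
    have := hb (1 - δ) t (by linarith) le_rfl
    convert this using 3
    push_cast; ring)
  have e1 : mlL δ (fun s => h s - h 0) = mlL δ h - h 0 * mlL δ (fun _ => 1) := by
    unfold mlL
    rw [← MeasureTheory.integral_const_mul, ← MeasureTheory.integral_sub i1 (i0.const_mul _)]
    congr 1; ext t; ring
  have e2 : mlL δ (fun s => h (s + 1) - h 0) = mlL δ (fun s => h (s + 1)) - h 0 * mlL δ (fun _ => 1) := by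
    unfold mlL
    rw [← MeasureTheory.integral_const_mul, ← MeasureTheory.integral_sub i2 (i0.const_mul _)]
    congr 1; ext t; ring
  rw [e1, e2] at s
  linear_combination s

theorem ml_iter (δ κ : ℝ) (h0 : 0 < δ) (h1 : δ < 1) (hκ0 : 0 ≤ κ) (hκ : κ < Real.pi) (h : ℂ → ℂ)
    (hd : Differentiable ℂ h)
    (hb : ∀ n : ℕ, ∃ K, ∀ σ t : ℝ, n - δ ≤ σ → σ ≤ n + 1 - δ →
      ‖h ((σ : ℂ) + t * Complex.I)‖ ≤ K * Real.exp (κ * |t|)) (N : ℕ) :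
    mlL δ h = 2 * mlL δ (fun _ => 1) * (∑ k ∈ Finset.range N, (-1) ^ k * h k)
      + (-1) ^ N * mlL δ (fun s => h (s + N)) := by
  induction N with
  | zero => simp
  | succ n ih =>
    obtain ⟨K, hK⟩ := hb n
    have r := ml_recur δ κ K h0 h1 hκ0 hκ (fun s => h (s + n)) (hd.comp (differentiable_id.add_const _)) (by
      intro σ t a b
      have := hK (σ + n) t (by linarith) (by linarith)
      convert this using 3
      push_cast; ring)
    rw [ih, r, Finset.sum_range_succ]
    have e : (fun s : ℂ => h (s + 1 + n)) = fun s => h (s + (n + 1 : ℕ)) := by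
      ext s; congr 1; push_cast; ring
    simp only [e, zero_add]
    ring

theorem ml_gamma_growth (y M : ℝ) (hy : 0 < y) (hM : 0 < M) :
    (Real.Gamma y)⁻¹ ≤ y * Real.exp M * M ^ (-y) := by
  have g : M ^ y * Real.exp (-M) ≤ Real.Gamma (y + 1) := by
    rw [Real.Gamma_eq_integral (by linarith)]
    have i := Real.GammaIntegral_convergent (s := y + 1) (by linarith)
    have sub : Set.Ioi M ⊆ Set.Ioi (0:ℝ) := Set.Ioi_subset_Ioi hM.le
    calc M ^ y * Real.exp (-M) = ∫ t in Set.Ioi M, Real.exp (-t) * M ^ y := by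
          rw [MeasureTheory.integral_mul_const, integral_exp_neg_Ioi, mul_comm]
      _ ≤ ∫ t in Set.Ioi M, Real.exp (-t) * t ^ (y + 1 - 1) := by
          refine MeasureTheory.setIntegral_mono_on ?_ (i.mono_set sub) measurableSet_Ioi ?_
          · have := exp_neg_integrableOn_Ioi M (b := 1) one_pos
            simp only [neg_mul, one_mul] at this
            exact this.mul_const _
          · intro t ht
            have : M < t := ht
            rw [add_sub_cancel_right]
            gcongr
      _ ≤ _ := by
          refine MeasureTheory.setIntegral_mono_set i ?_ (Filter.Eventually.of_forall sub)
          rw [Filter.EventuallyLE, MeasureTheory.ae_restrict_iff' measurableSet_Ioi]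
          refine Filter.Eventually.of_forall fun t ht => ?_
          have : 0 < t := ht
          simp only [Pi.zero_apply]
          positivity
  rw [Real.Gamma_add_one hy.ne', Real.exp_neg] at g
  have hG := Real.Gamma_pos_of_pos hy
  rw [Real.rpow_neg hM.le, inv_le_iff_one_le_mul₀ hG]
  have := Real.rpow_pos_of_pos hM y
  have := Real.exp_pos M
  calc 1 = (M ^ y * (Real.exp M)⁻¹) * (Real.exp M * (M ^ y)⁻¹) := by field_simp
    _ ≤ (y * Real.Gamma y) * (Real.exp M * (M ^ y)⁻¹) := by gcongr
    _ = _ := by ring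

theorem ml_summable (α b x : ℝ) (hα : 0 < α) (hb : 0 < b) (hx : 0 < x) :
    Summable (fun k : ℕ => x ^ k / Real.Gamma (α * k + b)) := by
  set M : ℝ := (2 * x) ^ (1 / α) with hM
  have M0 : 0 < M := by positivity
  have Ma : M ^ α = 2 * x := by
    rw [hM, ← Real.rpow_mul (by positivity)]
    field_simp
    simp
  have maj : Summable (fun k : ℕ => (Real.exp M * M ^ (-b)) * (α * ((k:ℝ) ^ 1 * (1/2:ℝ) ^ k) + b * (1/2:ℝ) ^ k)) := by
    refine Summable.mul_left _ (Summable.add (Summable.mul_left _ ?_) (Summable.mul_left _ ?_))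
    · exact summable_pow_mul_geometric_of_norm_lt_one 1 (by norm_num)
    · exact summable_geometric_of_lt_one (by norm_num) (by norm_num)
  refine Summable.of_nonneg_of_le (fun k => ?_) (fun k => ?_) maj
  · have := Real.Gamma_pos_of_pos (show 0 < α * k + b by positivity)
    positivity
  · have g := ml_gamma_growth (α * k + b) M (by positivity) M0
    have e : M ^ (-(α * k + b)) = M ^ (-b) * ((2 * x) ^ k)⁻¹ := by
      rw [← Ma, ← Real.rpow_mul_natCast M0.le, ← Real.rpow_neg M0.le, ← Real.rpow_add M0]
      ring_nf
    rw [div_eq_mul_inv]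
    calc _ ≤ x ^ k * ((α * k + b) * Real.exp M * M ^ (-(α * k + b))) := by gcongr
      _ = _ := by
        rw [e, mul_pow, div_pow, one_pow]
        field_simp

theorem ml_exists (α b : ℝ) (hα0 : 0 < α) (hα2 : α < 2) (hb : 0 < b) :
    ∃ δ D : ℝ, 0 < δ ∧ ∀ x : ℝ, 0 < x →
      |∑' k : ℕ, (-x) ^ k / Real.Gamma (α * k + b)| ≤ D * x ^ (-δ) := by
  obtain ⟨δ, h0, h1, hδ⟩ : ∃ δ : ℝ, 0 < δ ∧ δ < 1 ∧ 0 < b - α * δ := by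
    refine ⟨min (1/2) (b / (2 * α)), by positivity, ?_, ?_⟩
    · exact lt_of_le_of_lt (min_le_left _ _) (by norm_num)
    · have : α * min (1/2) (b / (2 * α)) ≤ α * (b / (2 * α)) := by
        gcongr; exact min_le_right _ _
      have e : α * (b / (2 * α)) = b / 2 := by field_simp
      linarith
  set σ₀ := b - α * δ with hσ₀
  have hpi := Real.pi_pos
  obtain ⟨c, hc1, hc2⟩ : ∃ c : ℝ, Real.pi / 2 < c ∧ c < Real.pi / α := by
    apply exists_between
    gcongr
  have hκ : c * α < Real.pi := by rwa [lt_div_iff₀ hα0] at hc2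
  have hc0 : 0 < c := by linarith
  have hκ0 : 0 ≤ c * α := by positivity
  obtain ⟨C, hC0, hC⟩ := ml_gamma_lower3 σ₀ c hδ hc1
  set A := mlL δ (fun _ => 1) with hA
  have hA0 : A ≠ 0 := ml_L_one_ne δ h0 h1
  set R := (2 / Real.sin (Real.pi * δ)) * ∫ t : ℝ, Real.exp (-((Real.pi - c * α) * |t|)) with hR
  refine ⟨δ, (C / Real.Gamma σ₀ * R) / ‖2 * A‖, h0, fun x hx => ?_⟩
  let G : ℂ → ℂ := fun s => (x : ℂ) ^ s * (Complex.Gamma (α * s + b))⁻¹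
  have hx' : (x : ℂ) ≠ 0 := by exact_mod_cast hx.ne'
  have hG : Differentiable ℂ G := by
    refine Differentiable.mul ?_ ?_
    · exact differentiable_id.const_cpow (Or.inl hx')
    · exact Complex.differentiable_one_div_Gamma.comp
        ((differentiable_id.const_mul (α : ℂ)).add_const (b : ℂ))
  have hGb : ∀ σ t : ℝ, -δ ≤ σ → ‖G (σ + t * Complex.I)‖ ≤
      (C * (x ^ σ / Real.Gamma (α * σ + b))) * Real.exp (c * α * |t|) := by
    intro σ t hσ
    have := hC (α * σ + b) (α * t) (by nlinarith)
    simp only [G]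
    rw [norm_mul, Complex.norm_cpow_eq_rpow_re_of_pos hx]
    have e1 : (σ + t * Complex.I : ℂ).re = σ := by simp
    have e2 : (α * (σ + t * Complex.I) + b : ℂ) = ((α * σ + b : ℝ) : ℂ) + ((α * t : ℝ) : ℂ) * Complex.I := by
      push_cast; ring
    rw [e1, e2]
    calc _ ≤ x ^ σ * (C * (Real.exp (c * |α * t|) / Real.Gamma (α * σ + b))) := by gcongr
      _ = _ := by rw [abs_mul, abs_of_pos hα0]; ring_nf
  have hstrip : ∀ n : ℕ, ∃ K, ∀ σ t : ℝ, n - δ ≤ σ → σ ≤ n + 1 - δ →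
      ‖G ((σ : ℂ) + t * Complex.I)‖ ≤ K * Real.exp (c * α * |t|) := by
    intro n
    have hn : (0:ℝ) ≤ n := by positivity
    have cont : ContinuousOn (fun σ : ℝ => C * (x ^ σ / Real.Gamma (α * σ + b))) (Set.Icc (n - δ) (n + 1 - δ)) := by
      intro σ hσ
      have hp : 0 < α * σ + b := by nlinarith [hσ.1]
      apply ContinuousAt.continuousWithinAt
      refine ContinuousAt.mul continuousAt_const (ContinuousAt.div ?_ ?_ (Real.Gamma_pos_of_pos hp).ne')
      · exact Real.continuousAt_const_rpow hx.ne'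
      · have : ContinuousAt Real.Gamma (α * σ + b) := by
          apply DifferentiableAt.continuousAt (𝕜 := ℝ)
          apply Real.differentiableAt_Gamma
          intro m hm
          have : (0:ℝ) ≤ m := by positivity
          linarith
        exact ContinuousAt.comp (f := fun σ : ℝ => α * σ + b) this (by fun_prop)
    obtain ⟨K, hK⟩ := isCompact_Icc.exists_bound_of_continuousOn cont
    refine ⟨K, fun σ t a b => (hGb σ t (by linarith)).trans ?_⟩
    gcongr
    exact (le_abs_self _).trans (hK σ ⟨a, b⟩)
  have iter := ml_iter δ (c * α) h0 h1 hκ0 hκ G hG hstrip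
  have hterm : ∀ k : ℕ, (-1) ^ k * G k = (((-x) ^ k / Real.Gamma (α * k + b) : ℝ) : ℂ) := by
    intro k
    simp only [G]
    have : (α * (k:ℂ) + b) = ((α * k + b : ℝ) : ℂ) := by push_cast; ring
    rw [this, Complex.Gamma_ofReal, Complex.cpow_natCast, neg_pow x]
    push_cast; ring
  have hsum : Summable (fun k : ℕ => (-x) ^ k / Real.Gamma (α * k + b)) := by
    refine Summable.of_norm_bounded (ml_summable α b x hα0 hb hx) fun k => ?_
    rw [norm_div, norm_pow, norm_neg, Real.norm_of_nonneg hx.le, Real.norm_of_nonneg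
      (Real.Gamma_pos_of_pos (by positivity)).le]
  have lim1 : Filter.Tendsto (fun N => ∑ k ∈ Finset.range N, (-1) ^ k * G k) Filter.atTop
      (nhds (((∑' k : ℕ, (-x) ^ k / Real.Gamma (α * k + b) : ℝ)) : ℂ)) := by
    simp only [hterm]
    exact (Complex.hasSum_ofReal.2 hsum.hasSum).tendsto_sum_nat
  have hLb : ∀ N : ℕ, ‖mlL δ (fun s => G (s + N))‖ ≤ C * (x ^ ((N:ℝ) - δ) / Real.Gamma (α * (N - δ) + b)) * R := by
    intro N
    apply ml_L_bound δ (c * α) _ h0 h1 hκ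
    intro t
    have := hGb (N - δ) t (by have : (0:ℝ) ≤ N := by positivity
                              linarith)
    convert this using 3
    push_cast; ring
  have lim2 : Filter.Tendsto (fun N : ℕ => (-1) ^ N * mlL δ (fun s => G (s + N))) Filter.atTop (nhds 0) := by
    have z := (ml_summable α σ₀ x hα0 hδ hx).tendsto_atTop_zero
    have z' := z.const_mul (C * x ^ (-δ) * R)
    rw [mul_zero] at z'
    refine squeeze_zero_norm (fun N => ?_) z'
    rw [norm_mul, norm_pow, norm_neg, norm_one, one_pow, one_mul]
    refine (hLb N).trans (le_of_eq ?_)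
    have e : α * ((N:ℝ) - δ) + b = α * N + σ₀ := by rw [hσ₀]; ring
    rw [e, sub_eq_add_neg, Real.rpow_add hx, Real.rpow_natCast]
    ring
  have eq : mlL δ G = 2 * A * (((∑' k : ℕ, (-x) ^ k / Real.Gamma (α * k + b) : ℝ)) : ℂ) := by
    have l := (lim1.const_mul (2 * A)).add lim2
    rw [add_zero] at l
    exact tendsto_nhds_unique (tendsto_const_nhds.congr iter) l
  have bd := hLb 0
  simp only [Nat.cast_zero, add_zero, zero_sub] at bd
  rw [eq, norm_mul, Complex.norm_real, Real.norm_eq_abs] at bd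
  have hpos : 0 < ‖2 * A‖ := norm_pos_iff.2 (mul_ne_zero two_ne_zero hA0)
  have e : α * (-δ) + b = σ₀ := by rw [hσ₀]; ring
  rw [e] at bd
  rw [div_mul_eq_mul_div, le_div_iff₀ hpos]
  calc _ = ‖2 * A‖ * |∑' k : ℕ, (-x) ^ k / Real.Gamma (α * k + b)| := mul_comm _ _
    _ ≤ _ := bd
    _ = _ := by ring

/-- For `0 < α < 2` and `β > α`, the scaled Mittag-Leffler function
`Γ(β-α)·x·E_{α,β}(-x)` tends to `1` as `x → ∞`. -/
theorem scaled_mittagLeffler_tendsto_one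
    (α β : ℝ) (hα0 : 0 < α) (hα2 : α < 2) (hβ : α < β) :
    Filter.Tendsto
      (fun x : ℝ => Real.Gamma (β - α) * x * ∑' k : ℕ, (-x) ^ k / Real.Gamma (α * k + β))
      Filter.atTop (nhds 1) := by
  have hb : 0 < β - α := by linarith
  obtain ⟨δ, D, hδ, hD⟩ := ml_exists α (β - α) hα0 hα2 hb
  have hΓ := Real.Gamma_pos_of_pos hb
  have z : Filter.Tendsto (fun x : ℝ => ∑' k : ℕ, (-x) ^ k / Real.Gamma (α * k + (β - α))) Filter.atTop (nhds 0) := by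
    have d := (tendsto_rpow_neg_atTop hδ).const_mul D
    rw [mul_zero] at d
    apply squeeze_zero_norm' _ d
    filter_upwards [Filter.eventually_gt_atTop 0] with x hx
    exact hD x hx
  have l := (z.const_mul (Real.Gamma (β - α))).const_sub 1
  rw [mul_zero, sub_zero] at l
  refine l.congr' ?_
  filter_upwards [Filter.eventually_gt_atTop 0] with x hx
  have hsum : Summable (fun k : ℕ => (-x) ^ k / Real.Gamma (α * k + (β - α))) := by
    refine Summable.of_norm_bounded (ml_summable α (β - α) x hα0 hb hx) fun k => ?_
    rw [norm_div, norm_pow, norm_neg, Real.norm_of_nonneg hx.le, Real.norm_of_nonneg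
      (Real.Gamma_pos_of_pos (by positivity)).le]
  rw [hsum.tsum_eq_zero_add]
  have e : ∀ k : ℕ, (-x) ^ (k + 1) / Real.Gamma (α * ((k + 1 : ℕ) : ℝ) + (β - α)) =
      (-x) * ((-x) ^ k / Real.Gamma (α * k + β)) := by
    intro k
    have : α * ((k + 1 : ℕ) : ℝ) + (β - α) = α * k + β := by push_cast; ring
    rw [this, pow_succ]; ring
  simp only [e]
  rw [tsum_mul_left]
  simp only [pow_zero, Nat.cast_zero, mul_zero, zero_add]
  field_simp
  ring
end

section
/- Let 0 < α < 1. Then −Γ(−α) · x² · E_{α,α}(−x) → 1 as x → ∞ (x real, x > 0). In other words, the scaled function 𝔈_{α,α}(x) = −Γ(−α) x² E_{α,α}(−x) has asymptotic value 1 at infinity. (Here Γ(−α) < 0 since 0 < α < 1, so −Γ(−α) > 0.) -/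
/-- Jump of `F` between the two horizontal lines `Im = ±π`. -/
noncomputable def mlJump (F : ℂ → ℂ) (u : ℝ) : ℂ :=
  F ((u : ℂ) + (Real.pi : ℝ) * Complex.I) - F ((u : ℂ) + ((-Real.pi : ℝ) : ℂ) * Complex.I)

/-- Hankel-type contour integral in logarithmic coordinates. -/
noncomputable def mlHankel (F : ℂ → ℂ) (c : ℝ) : ℂ :=
  Complex.I * (∫ y in (-Real.pi)..Real.pi, F ((c : ℂ) + (y : ℂ) * Complex.I)) +
    ∫ u in Set.Ioi c, mlJump F u

namespace MLAux

open MeasureTheory Filter Topology Complex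

lemma gammaExp {s : ℝ} (hs : 0 < s) :
    Integrable (fun u : ℝ => Real.exp (-Real.exp u) * Real.exp (s * u)) ∧
      ∫ u : ℝ, Real.exp (-Real.exp u) * Real.exp (s * u) = Real.Gamma s := by
  have himg : Real.exp '' Set.univ = Set.Ioi 0 := by
    rw [Set.image_univ, Real.range_exp]
  have hd : ∀ x ∈ (Set.univ : Set ℝ), HasDerivWithinAt Real.exp (Real.exp x) Set.univ x :=
    fun x _ => (Real.hasDerivAt_exp x).hasDerivWithinAt
  have hinj : Set.InjOn Real.exp Set.univ := Real.exp_injective.injOn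
  have heq : (fun u : ℝ => |Real.exp u| • (Real.exp (-Real.exp u) * (Real.exp u) ^ (s - 1)))
      = fun u : ℝ => Real.exp (-Real.exp u) * Real.exp (s * u) := by
    funext u
    rw [abs_of_pos (Real.exp_pos u), ← Real.exp_mul, smul_eq_mul, ← Real.exp_add, ← Real.exp_add,
      ← Real.exp_add]
    congr 1; ring
  have h1 := integrableOn_image_iff_integrableOn_abs_deriv_smul MeasurableSet.univ hd hinj
    (fun x => Real.exp (-x) * x ^ (s - 1))
  have h2 := integral_image_eq_integral_abs_deriv_smul MeasurableSet.univ hd hinj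
    (fun x => Real.exp (-x) * x ^ (s - 1))
  rw [himg] at h1 h2
  simp only [heq] at h1 h2
  constructor
  · exact integrableOn_univ.1 (h1.1 (Real.GammaIntegral_convergent hs))
  · rw [Real.Gamma_eq_integral hs, h2, Measure.restrict_univ]

lemma hankel_shift (F : ℂ → ℂ) (hF : ∀ w : ℂ, |w.im| ≤ Real.pi → DifferentiableAt ℂ F w)
    (hjInt : ∀ c, IntegrableOn (mlJump F) (Set.Ioi c)) (c d : ℝ) :
    mlHankel F c = mlHankel F d := by
  have hr := Complex.integral_boundary_rect_eq_zero_of_differentiableOn F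
    (⟨c, -Real.pi⟩ : ℂ) ⟨d, Real.pi⟩ (by
      intro w hw
      apply DifferentiableAt.differentiableWithinAt
      apply hF
      have h2 := hw.2
      simp only [Set.mem_preimage] at h2
      rw [Set.uIcc_of_le (by linarith [Real.pi_pos])] at h2
      exact abs_le.2 h2)
  have hcont : ∀ θ : ℝ, |θ| ≤ Real.pi → Continuous (fun u : ℝ => F ((u : ℂ) + (θ : ℂ) * Complex.I)) := by
    intro θ hθ
    rw [continuous_iff_continuousAt]
    intro u
    have : ContinuousAt F ((u : ℂ) + (θ : ℂ) * Complex.I) := (hF _ (by simpa using hθ)).continuousAt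
    exact ContinuousAt.comp (f := fun u : ℝ => (u : ℂ) + (θ : ℂ) * Complex.I) this (by fun_prop)
  have hs := intervalIntegral.integral_interval_add_Ioi (hjInt c) (hjInt d)
  have hj : ∫ u in c..d, mlJump F u = (∫ u in c..d, F ((u : ℂ) + (Real.pi : ℝ) * Complex.I))
      - ∫ u in c..d, F ((u : ℂ) + ((-Real.pi : ℝ) : ℂ) * Complex.I) := by
    unfold mlJump
    refine intervalIntegral.integral_sub ?_ ?_
    · exact (hcont _ (by rw [abs_of_pos Real.pi_pos])).intervalIntegrable _ _
    · exact (hcont _ (by rw [abs_neg, abs_of_pos Real.pi_pos])).intervalIntegrable _ _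
  unfold mlHankel
  rw [← hs, hj]
  simp only [smul_eq_mul] at hr
  linear_combination -hr

lemma hankel_eq (F : ℂ → ℂ) (hF : ∀ w : ℂ, |w.im| ≤ Real.pi → DifferentiableAt ℂ F w)
    (hjInt : Integrable (mlJump F)) (L : ℂ)
    (hL : Tendsto (fun c : ℝ => ∫ y in (-Real.pi)..Real.pi, F ((c : ℂ) + (y : ℂ) * Complex.I))
      atBot (𝓝 L)) (c : ℝ) :
    mlHankel F c = Complex.I * L + ∫ u, mlJump F u := by
  have h1 : Tendsto (fun c : ℝ => mlHankel F c) atBot (𝓝 (Complex.I * L + ∫ u, mlJump F u)) :=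
    (hL.const_mul _).add
      ((aecover_Ioi tendsto_id).integral_tendsto_of_countably_generated hjInt)
  have h2 : (fun c : ℝ => mlHankel F c) = fun _ => mlHankel F c := by
    funext d
    exact hankel_shift F hF (fun c => hjInt.integrableOn) d c
  rw [h2] at h1
  exact tendsto_nhds_unique tendsto_const_nhds h1

/-- Integrand for `1/Γ(β)`. -/
noncomputable def FB (β : ℝ) (w : ℂ) : ℂ := Complex.exp (Complex.exp w + (1 - β) * w)

lemma FB_diff (β : ℝ) : Differentiable ℂ (FB β) := by
  unfold FB; fun_prop

lemma FB_top (β u : ℝ) : FB β ((u : ℂ) + (Real.pi : ℝ) * Complex.I) =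
    ((Real.exp (-Real.exp u) * Real.exp ((1 - β) * u) : ℝ) : ℂ) *
      Complex.exp ((1 - β) * Real.pi * Complex.I) := by
  unfold FB
  rw [Complex.exp_add_pi_mul_I]
  push_cast
  rw [← Complex.exp_add, ← Complex.exp_add]
  congr 1; ring

lemma FB_bot (β u : ℝ) : FB β ((u : ℂ) + ((-Real.pi : ℝ) : ℂ) * Complex.I) =
    ((Real.exp (-Real.exp u) * Real.exp ((1 - β) * u) : ℝ) : ℂ) *
      Complex.exp (-((1 - β) * Real.pi * Complex.I)) := by
  unfold FB
  have : (u : ℂ) + ((-Real.pi : ℝ) : ℂ) * Complex.I = u - Real.pi * Complex.I := by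
    push_cast; ring
  rw [this, Complex.exp_sub_pi_mul_I]
  push_cast
  rw [← Complex.exp_add, ← Complex.exp_add]
  congr 1; ring

lemma FB_jump (β u : ℝ) : mlJump (FB β) u =
    ((Real.exp (-Real.exp u) * Real.exp ((1 - β) * u) : ℝ) : ℂ) *
      (2 * Complex.I * (Real.sin (Real.pi * β) : ℝ)) := by
  unfold mlJump
  rw [FB_top, FB_bot, ← mul_sub]
  congr 1
  have h : Real.sin (Real.pi * β) = Real.sin ((1 - β) * Real.pi) := by
    rw [← Real.sin_pi_sub]; congr 1; ring
  rw [h]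
  have e1 : Complex.exp ((1 - β) * Real.pi * Complex.I) =
      Complex.cos ((1 - β) * Real.pi) + Complex.sin ((1 - β) * Real.pi) * Complex.I :=
    Complex.exp_mul_I _
  have e2 : Complex.exp (-((1 - β) * Real.pi * Complex.I)) =
      Complex.cos ((1 - β) * Real.pi) - Complex.sin ((1 - β) * Real.pi) * Complex.I := by
    rw [← neg_mul, Complex.exp_mul_I, Complex.cos_neg, Complex.sin_neg]; ring
  rw [e1, e2]
  push_cast
  ring

lemma ofReal_gauss_int {β c : ℝ} (hβ : 0 ≤ β) :
    IntegrableOn (fun u : ℝ => Real.exp (-Real.exp u) * Real.exp ((1 - β) * u)) (Set.Ioi c) := by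
  have h1 := ((gammaExp (s := 1) one_pos).1.const_mul (Real.exp (-β * c))).integrableOn
    (s := Set.Ioi c)
  refine Integrable.mono' h1 (by fun_prop) ?_
  refine (ae_restrict_iff' measurableSet_Ioi).2 (Eventually.of_forall fun u hu => ?_)
  rw [Real.norm_of_nonneg (by positivity), ← Real.exp_add, ← Real.exp_add, ← Real.exp_add]
  apply Real.exp_le_exp.2
  have := mul_le_mul_of_nonneg_left (le_of_lt hu) hβ
  linarith

lemma FB_jump_int {β : ℝ} (hβ : 0 ≤ β) (c : ℝ) : IntegrableOn (mlJump (FB β)) (Set.Ioi c) := by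
  have : mlJump (FB β) = fun u : ℝ => ((Real.exp (-Real.exp u) * Real.exp ((1 - β) * u) : ℝ) : ℂ) *
      (2 * Complex.I * (Real.sin (Real.pi * β) : ℝ)) := by
    funext u; exact FB_jump β u
  rw [this]
  exact (ofReal_gauss_int hβ).ofReal.mul_const _

lemma norm_expexp (c y : ℝ) : ‖Complex.exp (Complex.exp ((c : ℂ) + (y : ℂ) * Complex.I))‖
    ≤ Real.exp (Real.exp c) := by
  rw [Complex.norm_exp]
  apply Real.exp_le_exp.2
  refine (Complex.re_le_norm _).trans ?_
  rw [Complex.norm_exp]; simp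

lemma hankel_base_lt {β : ℝ} (h1 : β < 1) (c : ℝ) :
    mlHankel (FB β) c = 2 * Real.pi * Complex.I / (Real.Gamma β : ℝ) := by
  have hjInt : Integrable (mlJump (FB β)) := by
    have : mlJump (FB β) = fun u : ℝ =>
      ((Real.exp (-Real.exp u) * Real.exp ((1 - β) * u) : ℝ) : ℂ) *
      (2 * Complex.I * (Real.sin (Real.pi * β) : ℝ)) := by
      funext u; exact FB_jump β u
    rw [this]
    exact (gammaExp (by linarith : 0 < 1 - β)).1.ofReal.mul_const _
  rw [hankel_eq (FB β) (fun w _ => FB_diff β w) hjInt 0 ?_]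
  · simp only [FB_jump]
    rw [integral_mul_const, integral_complex_ofReal, (gammaExp (by linarith : 0 < 1 - β)).2]
    have hr := Real.Gamma_mul_Gamma_one_sub β
    have hp : Real.Gamma (1 - β) ≠ 0 := (Real.Gamma_pos_of_pos (by linarith)).ne'
    have key : Real.Gamma (1 - β) * Real.sin (Real.pi * β) = Real.pi / Real.Gamma β := by
      have := Real.pi_ne_zero
      by_cases hs : Real.sin (Real.pi * β) = 0
      · rw [hs, div_zero] at hr
        have : Real.Gamma β = 0 := by simpa [hp] using hr
        rw [hs, this]; simp
      · have hg : Real.Gamma β ≠ 0 := by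
          intro h0; rw [h0, zero_mul, eq_comm, div_eq_zero_iff] at hr; tauto
        rw [eq_div_iff hs] at hr
        rw [eq_div_iff hg]; linarith
    have key' : ((Real.Gamma (1 - β) : ℝ) : ℂ) * (Real.sin (Real.pi * β) : ℝ) =
      Real.pi / (Real.Gamma β : ℝ) := by exact_mod_cast key
    calc _ = 2 * Complex.I * (((Real.Gamma (1 - β) : ℝ) : ℂ) * (Real.sin (Real.pi * β) : ℝ)) := by
            ring
      _ = _ := by rw [key']; ring
  · have hb : ∀ c : ℝ, ‖∫ y in (-Real.pi)..Real.pi, FB β ((c : ℂ) + (y : ℂ) * Complex.I)‖ ≤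
        Real.exp (Real.exp c) * Real.exp ((1 - β) * c) * |Real.pi - -Real.pi| := by
      intro c
      apply intervalIntegral.norm_integral_le_of_norm_le_const
      intro y _
      unfold FB
      rw [Complex.exp_add, norm_mul]
      refine mul_le_mul (norm_expexp c y) ?_ (norm_nonneg _) (Real.exp_pos _).le
      rw [Complex.norm_exp]
      apply le_of_eq; congr 1; simp
    refine squeeze_zero_norm hb ?_
    have t1 : Tendsto (fun c : ℝ => Real.exp (Real.exp c)) atBot (𝓝 (Real.exp 0)) :=
      (Real.continuous_exp.tendsto 0).comp Real.tendsto_exp_atBot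
    have t2 : Tendsto (fun c : ℝ => Real.exp ((1 - β) * c)) atBot (𝓝 0) :=
      Real.tendsto_exp_atBot.comp (tendsto_id.const_mul_atBot (by linarith))
    simpa using (t1.mul t2).mul_const (|Real.pi - -Real.pi|)

lemma hankel_base_one (c : ℝ) :
    mlHankel (FB 1) c = 2 * Real.pi * Complex.I / (Real.Gamma 1 : ℝ) := by
  have hj : mlJump (FB 1) = fun _ => 0 := by
    funext u; rw [FB_jump]; simp
  rw [hankel_eq (FB 1) (fun w _ => FB_diff 1 w) (by rw [hj]; exact integrable_zero _ _ _)
    (2 * Real.pi) ?_, hj]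
  · simp; ring
  · have hc : Continuous (fun ρ : ℝ => ∫ y in (-Real.pi)..Real.pi,
        Complex.exp ((ρ : ℂ) * Complex.exp ((y : ℂ) * Complex.I))) := by
      apply intervalIntegral.continuous_parametric_intervalIntegral_of_continuous'
      unfold Function.uncurry
      fun_prop
    have h0 := (hc.tendsto 0).comp Real.tendsto_exp_atBot
    have e0 : (∫ y in (-Real.pi)..Real.pi,
        Complex.exp (((0 : ℝ) : ℂ) * Complex.exp ((y : ℂ) * Complex.I))) = 2 * Real.pi := by
      simp; ring
    rw [e0] at h0
    refine h0.congr fun c => ?_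
    simp only [Function.comp]
    congr 1
    funext y
    unfold FB
    rw [Complex.exp_add (c : ℂ)]
    simp

lemma hankel_succ {β : ℝ} (hβ : 0 < β) (c : ℝ) :
    mlHankel (FB β) c = β * mlHankel (FB (β + 1)) c := by
  have hder : ∀ w, HasDerivAt (FB (β + 1)) (FB β w - β * FB (β + 1) w) w := by
    intro w
    have h : HasDerivAt (fun w : ℂ => Complex.exp w + (1 - ((β + 1 : ℝ) : ℂ)) * w)
      (Complex.exp w + (1 - ((β + 1 : ℝ) : ℂ)) * 1) w :=
      (Complex.hasDerivAt_exp w).add ((hasDerivAt_id w).const_mul _)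
    have h2 := h.cexp
    refine h2.congr_deriv ?_
    unfold FB
    have : Complex.exp (Complex.exp w + (1 - (β : ℂ)) * w) =
        Complex.exp (Complex.exp w + (1 - ((β + 1 : ℝ) : ℂ)) * w) * Complex.exp w := by
      rw [← Complex.exp_add]; congr 1; push_cast; ring
    rw [this]; push_cast; ring
  have hcF : ∀ b : ℝ, Continuous (FB b) := fun b => (FB_diff b).continuous
  -- vertical part
  have hv : Complex.I * (∫ y in (-Real.pi)..Real.pi, FB β ((c : ℂ) + (y : ℂ) * Complex.I))
      - β * (Complex.I * ∫ y in (-Real.pi)..Real.pi, FB (β + 1) ((c : ℂ) + (y : ℂ) * Complex.I))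
      = mlJump (FB (β + 1)) c := by
    have hd : ∀ y : ℝ, HasDerivAt (fun y : ℝ => FB (β + 1) ((c : ℂ) + (y : ℂ) * Complex.I))
        ((FB β ((c : ℂ) + (y : ℂ) * Complex.I) - β * FB (β + 1) ((c : ℂ) + (y : ℂ) * Complex.I))
          * Complex.I) y := by
      intro y
      have hl : HasDerivAt (fun y : ℝ => (c : ℂ) + (y : ℂ) * Complex.I) (Complex.I) y := by
        simpa using ((Complex.ofRealCLM.hasDerivAt (x := y)).mul_const Complex.I).const_add (c : ℂ)
      exact (hder _).comp y hl
    have hcont : ∀ b : ℝ, Continuous (fun y : ℝ => FB b ((c : ℂ) + (y : ℂ) * Complex.I)) :=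
      fun b => (hcF b).comp (by fun_prop)
    have := intervalIntegral.integral_eq_sub_of_hasDerivAt (a := -Real.pi) (b := Real.pi)
      (fun y _ => hd y) (Continuous.intervalIntegrable (by
        have := hcont β; have := hcont (β + 1); fun_prop) _ _)
    rw [intervalIntegral.integral_mul_const, intervalIntegral.integral_sub
      ((hcont _).intervalIntegrable _ _) (((hcont _).intervalIntegrable _ _).const_mul _),
      intervalIntegral.integral_const_mul] at this
    unfold mlJump
    rw [← this]; ring
  -- ray part
  have hr : (∫ u in Set.Ioi c, mlJump (FB β) u) - β * ∫ u in Set.Ioi c, mlJump (FB (β + 1)) u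
      = 0 - mlJump (FB (β + 1)) c := by
    have hi1 := FB_jump_int hβ.le c
    have hi2 := (FB_jump_int (by linarith : 0 ≤ β + 1) c).const_mul (β : ℂ)
    rw [← integral_const_mul, ← integral_sub hi1 hi2]
    have hd : ∀ u : ℝ, HasDerivAt (mlJump (FB (β + 1)))
        (mlJump (FB β) u - β * mlJump (FB (β + 1)) u) u := by
      intro u
      have hl : ∀ θ : ℝ, HasDerivAt (fun u : ℝ => (u : ℂ) + (θ : ℂ) * Complex.I) 1 u := by
        intro θ
        simpa using (Complex.ofRealCLM.hasDerivAt (x := u)).add_const ((θ : ℂ) * Complex.I)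
      have h1 := (hder _).comp u (hl Real.pi)
      have h2 := (hder _).comp u (hl (-Real.pi))
      refine (h1.sub h2).congr_deriv ?_
      unfold mlJump
      ring
    refine integral_Ioi_of_hasDerivAt_of_tendsto (hd c).continuousAt.continuousWithinAt
      (fun u _ => hd u) (hi1.sub hi2) ?_
    have : mlJump (FB (β + 1)) = fun u : ℝ =>
      ((Real.exp (-Real.exp u) * Real.exp ((1 - (β + 1)) * u) : ℝ) : ℂ) *
      (2 * Complex.I * (Real.sin (Real.pi * (β + 1)) : ℝ)) := by
      funext u; exact FB_jump (β + 1) u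
    rw [this]
    have t1 : Tendsto (fun u : ℝ => Real.exp (-Real.exp u)) atTop (𝓝 0) :=
      Real.tendsto_exp_neg_atTop_nhds_zero.comp Real.tendsto_exp_atTop
    have t2 : Tendsto (fun u : ℝ => Real.exp ((1 - (β + 1)) * u)) atTop (𝓝 0) :=
      Real.tendsto_exp_atBot.comp (tendsto_id.const_mul_atTop_of_neg (by linarith))
    have t3 := (Complex.continuous_ofReal.tendsto _).comp (t1.mul t2)
    simpa using t3.mul_const (2 * Complex.I * ((Real.sin (Real.pi * (β + 1)) : ℝ) : ℂ))
  unfold mlHankel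
  linear_combination hv + hr

lemma hankel_gamma (n : ℕ) : ∀ β : ℝ, 0 < β → β ≤ n + 1 → ∀ c : ℝ,
    mlHankel (FB β) c = 2 * Real.pi * Complex.I / (Real.Gamma β : ℝ) := by
  induction n with
  | zero =>
    intro β h0 h1 c
    rcases lt_or_eq_of_le (show β ≤ 1 by simpa using h1) with h | h
    · exact hankel_base_lt h c
    · subst h; exact hankel_base_one c
  | succ n ih =>
    intro β h0 h1 c
    by_cases h : β ≤ n + 1
    · exact ih β h0 h c
    · push Not at h
      have hn : (0 : ℝ) ≤ n := n.cast_nonneg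
      have hb : 0 < β - 1 := by linarith
      have h2 := ih (β - 1) hb (by push_cast at h1; linarith) c
      have h3 := hankel_succ hb c
      have h4 := Real.Gamma_add_one hb.ne'
      rw [sub_add_cancel] at h3 h4
      rw [h3] at h2
      rw [h4]
      have hne : ((β - 1 : ℝ) : ℂ) ≠ 0 := by exact_mod_cast hb.ne'
      have hg : ((Real.Gamma (β - 1) : ℝ) : ℂ) ≠ 0 := by
        exact_mod_cast (Real.Gamma_pos_of_pos hb).ne'
      rw [Complex.ofReal_mul]
      field_simp
      field_simp at h2
      linear_combination h2

/-- Integrand for the Mittag-Leffler function. -/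
noncomputable def FM (α x : ℝ) (w : ℂ) : ℂ :=
  Complex.exp (Complex.exp w) * Complex.exp w / (Complex.exp (α * w) + x)

lemma den_lower {α x : ℝ} (hα0 : 0 < α) (hα1 : α < 1) (hx : 0 < x) {w : ℂ}
    (hw : |w.im| ≤ Real.pi) :
    x * Real.sin (Real.pi * α) ≤ ‖Complex.exp (α * w) + x‖ := by
  have hpi := Real.pi_pos
  have hcos : Real.cos (Real.pi * α) ≤ Real.cos (α * w.im) := by
    rw [← Real.cos_abs (α * w.im), abs_mul, abs_of_pos hα0]
    apply Real.cos_le_cos_of_nonneg_of_le_pi (by positivity)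
    · nlinarith
    · nlinarith
  have hre : (Complex.exp (α * w) + x).re = Real.exp (α * w.re) * Real.cos (α * w.im) + x := by
    simp [Complex.exp_re]
  have him : (Complex.exp (α * w) + x).im = Real.exp (α * w.re) * Real.sin (α * w.im) := by
    simp [Complex.exp_im]
  refine le_of_abs_le (abs_le_of_sq_le_sq ?_ (norm_nonneg _))
  rw [Complex.sq_norm, Complex.normSq_apply, hre, him]
  set ρ := Real.exp (α * w.re) with hρ
  have hρp : 0 < ρ := Real.exp_pos _
  have h1 := Real.sin_sq_add_cos_sq (α * w.im)
  have h2 := Real.sin_sq_add_cos_sq (Real.pi * α)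
  have h3 : 0 ≤ ρ * x * (Real.cos (α * w.im) - Real.cos (Real.pi * α)) :=
    mul_nonneg (by positivity) (by linarith)
  have e1 : (ρ * Real.cos (α * w.im) + x) * (ρ * Real.cos (α * w.im) + x) +
      ρ * Real.sin (α * w.im) * (ρ * Real.sin (α * w.im)) =
      ρ ^ 2 + 2 * (ρ * x * Real.cos (α * w.im)) + x ^ 2 := by
    linear_combination ρ ^ 2 * h1
  have e2 : (x * Real.sin (Real.pi * α)) ^ 2 = x ^ 2 - x ^ 2 * Real.cos (Real.pi * α) ^ 2 := by
    linear_combination x ^ 2 * h2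
  rw [e1, e2]
  nlinarith [sq_nonneg (ρ + x * Real.cos (Real.pi * α))]

lemma sin_pos' {α : ℝ} (hα0 : 0 < α) (hα1 : α < 1) : 0 < Real.sin (Real.pi * α) :=
  Real.sin_pos_of_pos_of_lt_pi (by have := Real.pi_pos; positivity)
    (by have := Real.pi_pos; nlinarith)

lemma den_ne {α x : ℝ} (hα0 : 0 < α) (hα1 : α < 1) (hx : 0 < x) {w : ℂ}
    (hw : |w.im| ≤ Real.pi) : Complex.exp (α * w) + x ≠ 0 := by
  have := den_lower hα0 hα1 hx hw
  have h2 : 0 < x * Real.sin (Real.pi * α) := mul_pos hx (sin_pos' hα0 hα1)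
  exact norm_pos_iff.1 (h2.trans_le this)

lemma FM_diff {α x : ℝ} (hα0 : 0 < α) (hα1 : α < 1) (hx : 0 < x) (w : ℂ)
    (hw : |w.im| ≤ Real.pi) : DifferentiableAt ℂ (FM α x) w := by
  unfold FM
  exact DifferentiableAt.div (by fun_prop) (by fun_prop) (den_ne hα0 hα1 hx hw)

/-- The product of the two boundary denominators. -/
noncomputable def den2 (α x u : ℝ) : ℂ :=
  (Complex.exp (α * ((u : ℂ) + (Real.pi : ℝ) * Complex.I)) + x) *
    (Complex.exp (α * ((u : ℂ) + ((-Real.pi : ℝ) : ℂ) * Complex.I)) + x)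

lemma im_top (u : ℝ) : |((u : ℂ) + (Real.pi : ℝ) * Complex.I).im| ≤ Real.pi := by
  simp [abs_of_pos Real.pi_pos]

lemma im_bot (u : ℝ) : |((u : ℂ) + ((-Real.pi : ℝ) : ℂ) * Complex.I).im| ≤ Real.pi := by
  simp [abs_of_pos Real.pi_pos]

lemma FM_jump {α x : ℝ} (hα0 : 0 < α) (hα1 : α < 1) (hx : 0 < x) (u : ℝ) :
    mlJump (FM α x) u = ((Real.exp (-Real.exp u) * Real.exp ((1 + α) * u) : ℝ) : ℂ) *
      (2 * Complex.I * (Real.sin (Real.pi * α) : ℝ)) / den2 α x u := by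
  have hA := den_ne hα0 hα1 hx (im_top u)
  have hB := den_ne hα0 hα1 hx (im_bot u)
  unfold mlJump FM den2
  have et : Complex.exp ((u : ℂ) + (Real.pi : ℝ) * Complex.I) = -Complex.exp u :=
    Complex.exp_add_pi_mul_I _
  have eb : Complex.exp ((u : ℂ) + ((-Real.pi : ℝ) : ℂ) * Complex.I) = -Complex.exp u := by
    have : (u : ℂ) + ((-Real.pi : ℝ) : ℂ) * Complex.I = u - Real.pi * Complex.I := by
      push_cast; ring
    rw [this, Complex.exp_sub_pi_mul_I]
  have hdiff : Complex.exp (α * ((u : ℂ) + (Real.pi : ℝ) * Complex.I)) -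
      Complex.exp (α * ((u : ℂ) + ((-Real.pi : ℝ) : ℂ) * Complex.I)) =
      Complex.exp (α * u) * (2 * Complex.I * (Real.sin (Real.pi * α) : ℝ)) := by
    have a1 : (α : ℂ) * ((u : ℂ) + (Real.pi : ℝ) * Complex.I) =
      α * u + (Real.pi * α) * Complex.I := by ring
    have a2 : (α : ℂ) * ((u : ℂ) + ((-Real.pi : ℝ) : ℂ) * Complex.I) =
      α * u + (-(Real.pi * α)) * Complex.I := by push_cast; ring
    rw [a1, a2, Complex.exp_add, Complex.exp_add, Complex.exp_mul_I, Complex.exp_mul_I,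
      Complex.cos_neg, Complex.sin_neg]
    push_cast
    ring
  rw [et, eb, div_sub_div _ _ hA hB]
  congr 1
  push_cast
  have es : Complex.exp ((1 + α) * u) = Complex.exp u * Complex.exp (α * u) := by
    rw [← Complex.exp_add]; congr 1; ring
  rw [es]
  push_cast at hdiff
  linear_combination (Complex.exp (-Complex.exp u) * Complex.exp u) * hdiff

lemma den2_lower {α x : ℝ} (hα0 : 0 < α) (hα1 : α < 1) (hx : 0 < x) (u : ℝ) :
    (x * Real.sin (Real.pi * α)) ^ 2 ≤ ‖den2 α x u‖ := by
  unfold den2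
  rw [norm_mul, sq]
  have h2 : 0 < x * Real.sin (Real.pi * α) := mul_pos hx (sin_pos' hα0 hα1)
  exact mul_le_mul (den_lower hα0 hα1 hx (im_top u)) (den_lower hα0 hα1 hx (im_bot u)) h2.le
    (norm_nonneg _)

lemma den2_cont (α x : ℝ) : Continuous (den2 α x) := by
  unfold den2; fun_prop

lemma FM_jump_bound {α x : ℝ} (hα0 : 0 < α) (hα1 : α < 1) (hx : 0 < x) (u : ℝ) :
    ‖mlJump (FM α x) u‖ ≤ Real.exp (-Real.exp u) * Real.exp ((1 + α) * u) *
      (2 / (x * Real.sin (Real.pi * α)) ^ 2) := by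
  rw [FM_jump hα0 hα1 hx, norm_div, norm_mul, Complex.norm_real,
    Real.norm_of_nonneg (by positivity), norm_mul, Complex.norm_real, mul_div_assoc]
  have h2 : 0 < x * Real.sin (Real.pi * α) := mul_pos hx (sin_pos' hα0 hα1)
  have hs : ‖Real.sin (Real.pi * α)‖ ≤ 1 := Real.abs_sin_le_one _
  have hI : ‖(2 * Complex.I : ℂ)‖ = 2 := by simp
  rw [hI]
  gcongr
  · linarith
  · exact den2_lower hα0 hα1 hx u

lemma FM_jump_meas {α x : ℝ} (hα0 : 0 < α) (hα1 : α < 1) (hx : 0 < x) :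
    AEStronglyMeasurable (mlJump (FM α x)) := by
  have : mlJump (FM α x) = fun u : ℝ =>
      ((Real.exp (-Real.exp u) * Real.exp ((1 + α) * u) : ℝ) : ℂ) *
      (2 * Complex.I * (Real.sin (Real.pi * α) : ℝ)) / den2 α x u := by
    funext u; exact FM_jump hα0 hα1 hx u
  rw [this]
  have h2 : 0 < x * Real.sin (Real.pi * α) := mul_pos hx (sin_pos' hα0 hα1)
  apply Continuous.aestronglyMeasurable
  refine Continuous.div (by fun_prop) (den2_cont α x) fun u => ?_
  exact norm_pos_iff.1 ((pow_pos h2 2).trans_le (den2_lower hα0 hα1 hx u))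

lemma FM_jump_int {α x : ℝ} (hα0 : 0 < α) (hα1 : α < 1) (hx : 0 < x) :
    Integrable (mlJump (FM α x)) :=
  Integrable.mono' ((gammaExp (by linarith : 0 < 1 + α)).1.mul_const _)
    (FM_jump_meas hα0 hα1 hx) (Eventually.of_forall (FM_jump_bound hα0 hα1 hx))

lemma hankel_FM {α x : ℝ} (hα0 : 0 < α) (hα1 : α < 1) (hx : 0 < x) (c : ℝ) :
    mlHankel (FM α x) c = ∫ u, mlJump (FM α x) u := by
  rw [hankel_eq (FM α x) (FM_diff hα0 hα1 hx) (FM_jump_int hα0 hα1 hx) 0 ?_]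
  · simp
  have h2 : 0 < x * Real.sin (Real.pi * α) := mul_pos hx (sin_pos' hα0 hα1)
  have hb : ∀ c : ℝ, ‖∫ y in (-Real.pi)..Real.pi, FM α x ((c : ℂ) + (y : ℂ) * Complex.I)‖ ≤
      Real.exp (Real.exp c) * Real.exp c / (x * Real.sin (Real.pi * α)) *
        |Real.pi - -Real.pi| := by
    intro c
    apply intervalIntegral.norm_integral_le_of_norm_le_const
    intro y hy
    rw [Set.uIoc_of_le (by linarith [Real.pi_pos])] at hy
    unfold FM
    rw [norm_div, norm_mul]
    have h3 := den_lower hα0 hα1 hx (w := (c : ℂ) + (y : ℂ) * Complex.I)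
      (by simpa using abs_le.2 ⟨hy.1.le, hy.2⟩)
    have h4 : ‖Complex.exp ((c : ℂ) + (y : ℂ) * Complex.I)‖ ≤ Real.exp c := by
      rw [Complex.norm_exp]; simp
    have h5 := norm_expexp c y
    gcongr
  refine squeeze_zero_norm hb ?_
  have t1 : Tendsto (fun c : ℝ => Real.exp (Real.exp c)) atBot (𝓝 (Real.exp 0)) :=
    (Real.continuous_exp.tendsto 0).comp Real.tendsto_exp_atBot
  simpa using ((t1.mul Real.tendsto_exp_atBot).div_const (x * Real.sin (Real.pi * α))).mul_const
    (|Real.pi - -Real.pi|)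

lemma FB_eq_pow (α x : ℝ) (k : ℕ) (w : ℂ) :
    (-(x : ℂ)) ^ k * FB (α * k + α) w =
      Complex.exp (Complex.exp w) * Complex.exp w * Complex.exp (-(α * w)) *
        (-(x * Complex.exp (-(α * w)))) ^ k := by
  unfold FB
  have : (-((x : ℂ) * Complex.exp (-(α * w)))) ^ k =
      (-(x : ℂ)) ^ k * Complex.exp (k * (-(α * w))) := by
    rw [← neg_mul, mul_pow, ← Complex.exp_nat_mul]
  rw [this]
  have : Complex.exp (Complex.exp w + (1 - ((α * k + α : ℝ) : ℂ)) * w) =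
      Complex.exp (Complex.exp w) * Complex.exp w * Complex.exp (-(α * w)) *
        Complex.exp (k * (-(α * w))) := by
    rw [← Complex.exp_add, ← Complex.exp_add, ← Complex.exp_add]
    congr 1; push_cast; ring
  rw [this]; ring

lemma small_ratio {α x c : ℝ} (hα0 : 0 < α) (hx : 0 < x) (hc : Real.exp (α * c) = 2 * x)
    {w : ℂ} (hw : c ≤ w.re) : ‖-((x : ℂ) * Complex.exp (-(α * w)))‖ ≤ 1 / 2 := by
  rw [norm_neg, norm_mul, Complex.norm_real, Real.norm_of_nonneg hx.le, Complex.norm_exp]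
  have h1 : (-((α : ℂ) * w)).re = -(α * w.re) := by simp
  rw [h1, Real.exp_neg]
  have h2 : 2 * x ≤ Real.exp (α * w.re) := by
    rw [← hc]; exact Real.exp_le_exp.2 (by nlinarith)
  rw [← div_eq_mul_inv, div_le_div_iff₀ (Real.exp_pos _) two_pos]
  linarith

lemma FB_hasSum {α x c : ℝ} (hα0 : 0 < α) (hx : 0 < x) (hc : Real.exp (α * c) = 2 * x)
    {w : ℂ} (hw : c ≤ w.re) :
    HasSum (fun k : ℕ => (-(x : ℂ)) ^ k * FB (α * k + α) w) (FM α x w) := by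
  have hr := small_ratio hα0 hx hc hw
  have h1 := (hasSum_geometric_of_norm_lt_one (hr.trans_lt (by norm_num))).mul_left
    (Complex.exp (Complex.exp w) * Complex.exp w * Complex.exp (-(α * w)))
  simp only [FB_eq_pow]
  suffices h : FM α x w = Complex.exp (Complex.exp w) * Complex.exp w * Complex.exp (-(α * w)) *
      (1 - -((x : ℂ) * Complex.exp (-(α * w))))⁻¹ by
    rw [h]; exact h1
  unfold FM
  have hne := Complex.exp_ne_zero (α * w)
  rw [mul_assoc _ (Complex.exp (-(α * w))), div_eq_mul_inv]
  congr 1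
  rw [Complex.exp_neg, ← mul_inv]
  congr 1
  field_simp
  ring

lemma FB_norm {α x c : ℝ} (hα0 : 0 < α) (hx : 0 < x) (hc : Real.exp (α * c) = 2 * x)
    {w : ℂ} (hw : c ≤ w.re) (k : ℕ) :
    ‖(-(x : ℂ)) ^ k * FB (α * k + α) w‖ ≤
      ‖Complex.exp (Complex.exp w)‖ * Real.exp w.re * Real.exp (-(α * c)) * (1 / 2) ^ k := by
  have hr := small_ratio hα0 hx hc hw
  rw [FB_eq_pow, norm_mul, norm_mul, norm_mul, norm_pow]
  have h1 : ‖Complex.exp w‖ = Real.exp w.re := Complex.norm_exp w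
  have h2 : ‖Complex.exp (-((α : ℂ) * w))‖ ≤ Real.exp (-(α * c)) := by
    rw [Complex.norm_exp]
    apply Real.exp_le_exp.2
    simp only [neg_re, re_ofReal_mul]
    nlinarith
  rw [h1]
  gcongr

lemma jump_smul (a : ℂ) (F : ℂ → ℂ) (u : ℝ) : mlJump (fun w => a * F w) u = a * mlJump F u := by
  unfold mlJump; ring

lemma ml_hasSum {α x : ℝ} (hα0 : 0 < α) (hα1 : α < 1) (hx : 0 < x) :
    HasSum (fun k : ℕ => (-(x : ℂ)) ^ k * (2 * Real.pi * Complex.I /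
      (Real.Gamma (α * k + α) : ℝ))) (∫ u, mlJump (FM α x) u) := by
  obtain ⟨c, hc⟩ : ∃ c : ℝ, Real.exp (α * c) = 2 * x := by
    refine ⟨Real.log (2 * x) / α, ?_⟩
    rw [mul_div_cancel₀ _ hα0.ne', Real.exp_log (by positivity)]
  have hgeo : ∀ a : ℝ, HasSum (fun k : ℕ => a * (1 / 2 : ℝ) ^ k) (a * 2) := fun a =>
    hasSum_geometric_two.mul_left a
  have hβ : ∀ k : ℕ, 0 < α * k + α := fun k => by positivity
  rw [← hankel_FM hα0 hα1 hx c]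
  have hterm : ∀ k : ℕ, (-(x : ℂ)) ^ k * (2 * Real.pi * Complex.I /
      (Real.Gamma (α * k + α) : ℝ)) = Complex.I * (∫ y in (-Real.pi)..Real.pi,
        (-(x : ℂ)) ^ k * FB (α * k + α) ((c : ℂ) + (y : ℂ) * Complex.I)) +
        ∫ u in Set.Ioi c, (-(x : ℂ)) ^ k * mlJump (FB (α * k + α)) u := by
    intro k
    obtain ⟨n, hn⟩ := exists_nat_ge (α * k + α)
    rw [← hankel_gamma n _ (hβ k) (by linarith) c]
    unfold mlHankel
    rw [intervalIntegral.integral_const_mul, integral_const_mul]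
    ring
  simp only [hterm]
  unfold mlHankel
  refine HasSum.add (HasSum.mul_left _ ?_) ?_
  · refine intervalIntegral.hasSum_integral_of_dominated_convergence
      (fun k _ => Real.exp (Real.exp c) * Real.exp c * Real.exp (-(α * c)) * (1 / 2) ^ k)
      ?_ ?_ ?_ ?_ ?_
    · intro k
      apply Continuous.aestronglyMeasurable
      exact continuous_const.mul ((FB_diff _).continuous.comp (by fun_prop))
    · intro k
      refine Eventually.of_forall fun y _ => ?_
      refine (FB_norm hα0 hx hc (by simp) k).trans ?_
      have := norm_expexp c y
      have e : ((c : ℂ) + (y : ℂ) * Complex.I).re = c := by simp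
      rw [e]
      gcongr
    · exact Eventually.of_forall fun y _ => (hgeo _).summable
    · simp only [(hgeo _).tsum_eq]
      exact intervalIntegrable_const
    · exact Eventually.of_forall fun y _ => FB_hasSum hα0 hx hc (by simp)
  · refine MeasureTheory.hasSum_integral_of_dominated_convergence
      (fun k u => 2 * (Real.exp (-Real.exp u) * Real.exp (1 * u) * Real.exp (-(α * c))) *
        (1 / 2) ^ k) ?_ ?_ ?_ ?_ ?_
    · intro k
      exact ((FB_jump_int (hβ k).le c).const_mul _).aestronglyMeasurable
    · intro k
      refine (ae_restrict_iff' measurableSet_Ioi).2 (Eventually.of_forall fun u hu => ?_)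
      have hu' : c ≤ u := le_of_lt hu
      have e1 : (-(x : ℂ)) ^ k * mlJump (FB (α * k + α)) u =
        (-(x : ℂ)) ^ k * FB (α * k + α) ((u : ℂ) + (Real.pi : ℝ) * Complex.I) -
        (-(x : ℂ)) ^ k * FB (α * k + α) ((u : ℂ) + ((-Real.pi : ℝ) : ℂ) * Complex.I) := by
        unfold mlJump; ring
      rw [e1]
      refine (norm_sub_le _ _).trans ?_
      have b1 := FB_norm hα0 hx hc (w := (u : ℂ) + (Real.pi : ℝ) * Complex.I) (by simpa using hu') k
      have b2 := FB_norm hα0 hx hc (w := (u : ℂ) + ((-Real.pi : ℝ) : ℂ) * Complex.I)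
        (by simpa using hu') k
      have n1 : ‖Complex.exp (Complex.exp ((u : ℂ) + (Real.pi : ℝ) * Complex.I))‖ =
          Real.exp (-Real.exp u) := by
        rw [Complex.exp_add_pi_mul_I, Complex.norm_exp]; simp [← Complex.ofReal_exp]
      have n2 : ‖Complex.exp (Complex.exp ((u : ℂ) + ((-Real.pi : ℝ) : ℂ) * Complex.I))‖ =
          Real.exp (-Real.exp u) := by
        have : (u : ℂ) + ((-Real.pi : ℝ) : ℂ) * Complex.I = u - Real.pi * Complex.I := by
          push_cast; ring
        rw [this, Complex.exp_sub_pi_mul_I, Complex.norm_exp]; simp [← Complex.ofReal_exp]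
      have r1 : ((u : ℂ) + (Real.pi : ℝ) * Complex.I).re = u := by simp
      have r2 : ((u : ℂ) + ((-Real.pi : ℝ) : ℂ) * Complex.I).re = u := by simp
      rw [n1, r1] at b1
      rw [n2, r2] at b2
      rw [one_mul]
      linarith
    · exact Eventually.of_forall fun y => (hgeo _).summable
    · simp only [(hgeo _).tsum_eq]
      exact ((((gammaExp one_pos).1.mul_const _).const_mul _).mul_const _).integrableOn
    · refine (ae_restrict_iff' measurableSet_Ioi).2 (Eventually.of_forall fun u hu => ?_)
      have hu' : c ≤ u := le_of_lt hu
      have s1 := FB_hasSum hα0 hx hc (w := (u : ℂ) + (Real.pi : ℝ) * Complex.I) (by simpa using hu')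
      have s2 := FB_hasSum hα0 hx hc (w := (u : ℂ) + ((-Real.pi : ℝ) : ℂ) * Complex.I)
        (by simpa using hu')
      have := s1.sub s2
      simp only [← mul_sub] at this
      exact this

lemma den2_tendsto (α u : ℝ) :
    Tendsto (fun x : ℝ => (x : ℂ) ^ 2 / den2 α x u) atTop (𝓝 1) := by
  have hinv : Tendsto (fun x : ℝ => ((x⁻¹ : ℝ) : ℂ)) atTop (𝓝 0) := by
    have := (Complex.continuous_ofReal.tendsto 0).comp tendsto_inv_atTop_zero
    rw [Complex.ofReal_zero] at this
    exact this
  have h1 : ∀ a : ℂ, Tendsto (fun x : ℝ => a * ((x⁻¹ : ℝ) : ℂ) + 1) atTop (𝓝 1) := by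
    intro a
    simpa using (hinv.const_mul a).add_const 1
  have h2 := ((h1 (Complex.exp (α * ((u : ℂ) + (Real.pi : ℝ) * Complex.I)))).mul
    (h1 (Complex.exp (α * ((u : ℂ) + ((-Real.pi : ℝ) : ℂ) * Complex.I))))).inv₀ (by simp)
  rw [mul_one, inv_one] at h2
  refine h2.congr' ?_
  filter_upwards [eventually_gt_atTop 0] with x hx
  have hx' : (x : ℂ) ≠ 0 := by exact_mod_cast hx.ne'
  unfold den2
  generalize Complex.exp (α * ((u : ℂ) + (Real.pi : ℝ) * Complex.I)) = A
  generalize Complex.exp (α * ((u : ℂ) + ((-Real.pi : ℝ) : ℂ) * Complex.I)) = B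
  have e : (A + x) * (B + x) = (x : ℂ) ^ 2 * ((A * ((x⁻¹ : ℝ) : ℂ) + 1) * (B * ((x⁻¹ : ℝ) : ℂ) + 1)) := by
    push_cast; field_simp
  rw [e]
  generalize (A * ((x⁻¹ : ℝ) : ℂ) + 1) * (B * ((x⁻¹ : ℝ) : ℂ) + 1) = C
  rw [div_eq_mul_inv, mul_inv, ← mul_assoc, mul_inv_cancel₀ (pow_ne_zero 2 hx'), one_mul]

lemma jump_limit {α : ℝ} (hα0 : 0 < α) (hα1 : α < 1) :
    Tendsto (fun x : ℝ => (x : ℂ) ^ 2 * ∫ u, mlJump (FM α x) u) atTop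
      (𝓝 ((Real.Gamma (1 + α) : ℝ) * (2 * Complex.I * (Real.sin (Real.pi * α) : ℝ)))) := by
  have hg := gammaExp (by linarith : 0 < 1 + α)
  have hs := sin_pos' hα0 hα1
  have e : ((Real.Gamma (1 + α) : ℝ) : ℂ) * (2 * Complex.I * (Real.sin (Real.pi * α) : ℝ)) =
      ∫ u : ℝ, ((Real.exp (-Real.exp u) * Real.exp ((1 + α) * u) : ℝ) : ℂ) *
      (2 * Complex.I * (Real.sin (Real.pi * α) : ℝ)) := by
    rw [integral_mul_const, integral_complex_ofReal, hg.2]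
  rw [e]
  simp only [← integral_const_mul]
  refine tendsto_integral_filter_of_dominated_convergence
    (fun u => Real.exp (-Real.exp u) * Real.exp ((1 + α) * u) *
      (2 / (Real.sin (Real.pi * α)) ^ 2)) ?_ ?_ (hg.1.mul_const _) ?_
  · filter_upwards [eventually_gt_atTop 0] with x hx
    exact (FM_jump_meas hα0 hα1 hx).const_mul _
  · filter_upwards [eventually_gt_atTop 0] with x hx
    refine Eventually.of_forall fun u => ?_
    rw [norm_mul, norm_pow, Complex.norm_real, Real.norm_of_nonneg hx.le]
    refine (mul_le_mul_of_nonneg_left (FM_jump_bound hα0 hα1 hx u) (by positivity)).trans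
      (le_of_eq ?_)
    field_simp
  · refine Eventually.of_forall fun u => ?_
    have h := (den2_tendsto α u).const_mul
      (((Real.exp (-Real.exp u) * Real.exp ((1 + α) * u) : ℝ) : ℂ) *
      (2 * Complex.I * (Real.sin (Real.pi * α) : ℝ)))
    rw [mul_one] at h
    refine h.congr' ?_
    filter_upwards [eventually_gt_atTop 0] with x hx
    rw [FM_jump hα0 hα1 hx]
    ring

end MLAux

/-- For `0 < α < 1`, the scaled Mittag-Leffler function
`-Γ(-α)·x²·E_{α,α}(-x)` tends to `1` as `x → ∞`. -/
theorem scaled_mittagLeffler_tendsto_one_beta_eq_alpha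
    (α : ℝ) (hα0 : 0 < α) (hα1 : α < 1) :
    Filter.Tendsto
      (fun x : ℝ => -Real.Gamma (-α) * x ^ 2 * ∑' k : ℕ, (-x) ^ k / Real.Gamma (α * k + α))
      Filter.atTop (nhds 1) := by
  have hs := MLAux.sin_pos' hα0 hα1
  have hpi := Real.pi_ne_zero
  have hlim := (MLAux.jump_limit hα0 hα1).const_mul
    (-(Real.Gamma (-α) : ℝ) / (2 * Real.pi * Complex.I) : ℂ)
  have hone : (-(Real.Gamma (-α) : ℝ) / (2 * Real.pi * Complex.I) : ℂ) *
      ((Real.Gamma (1 + α) : ℝ) * (2 * Complex.I * (Real.sin (Real.pi * α) : ℝ))) = 1 := by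
    have hr := Real.Gamma_mul_Gamma_one_sub (-α)
    rw [sub_neg_eq_add, mul_neg, Real.sin_neg, div_neg] at hr
    have h1 : -Real.Gamma (-α) * Real.Gamma (1 + α) * Real.sin (Real.pi * α) = Real.pi := by
      have : -Real.Gamma (-α) * Real.Gamma (1 + α) = Real.pi / Real.sin (Real.pi * α) := by
        linarith
      rw [this]; field_simp
    have h2 : -((Real.Gamma (-α) : ℝ) : ℂ) * (Real.Gamma (1 + α) : ℝ) *
        (Real.sin (Real.pi * α) : ℝ) = (Real.pi : ℝ) := by exact_mod_cast h1
    have hpi' : (Real.pi : ℂ) ≠ 0 := by exact_mod_cast hpi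
    have hI := Complex.I_ne_zero
    rw [div_mul_eq_mul_div, div_eq_one_iff_eq (by simp [hpi'])]
    linear_combination (2 * Complex.I) * h2
  rw [hone] at hlim
  have hre := (Complex.continuous_re.tendsto 1).comp hlim
  rw [Complex.one_re] at hre
  refine hre.congr' ?_
  filter_upwards [Filter.eventually_gt_atTop 0] with x hx
  have hsum := (MLAux.ml_hasSum hα0 hα1 hx).tsum_eq
  have hpi' : (Real.pi : ℂ) ≠ 0 := by exact_mod_cast hpi
  have e1 : (∑' k : ℕ, (-(x : ℂ)) ^ k * (2 * Real.pi * Complex.I /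
      (Real.Gamma (α * k + α) : ℝ))) = (2 * Real.pi * Complex.I) *
      ((∑' k : ℕ, (-x) ^ k / Real.Gamma (α * k + α) : ℝ) : ℂ) := by
    rw [Complex.ofReal_tsum, ← tsum_mul_left]
    congr 1
    funext k
    push_cast
    ring
  simp only [Function.comp]
  rw [← hsum, e1]
  have e2 : (-(Real.Gamma (-α) : ℝ) / (2 * Real.pi * Complex.I) : ℂ) * ((x : ℂ) ^ 2 *
      ((2 * Real.pi * Complex.I) * ((∑' k : ℕ, (-x) ^ k / Real.Gamma (α * k + α) : ℝ) : ℂ))) =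
      ((-Real.Gamma (-α) * x ^ 2 * ∑' k : ℕ, (-x) ^ k / Real.Gamma (α * k + α) : ℝ) : ℂ) := by
    have hI := Complex.I_ne_zero
    generalize (∑' k : ℕ, (-x) ^ k / Real.Gamma (α * k + α) : ℝ) = S
    push_cast
    field_simp
  rw [e2, Complex.ofReal_re]
end

section
/- Let 0 < α ≤ 1 and β ≥ α be real numbers. Then the function f(x) = E_{α,β}(−x) is strictly decreasing on [0, ∞), satisfies f(0) = 1/Γ(β) and f(x) → 0 as x → ∞, and maps [0, ∞) bijectively onto the half-open interval (0, 1/Γ(β)]. Consequently the inverse Mittag-Leffler function −L_{α,β} : (0, 1/Γ(β)] → [0, ∞) is well defined by −L_{α,β}(y) = x iff y = E_{α,β}(−x). -/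
namespace ML

noncomputable def q (m : ℕ) (γ : ℝ) : ℝ := (∏ j ∈ Finset.range m, (γ + j)) / (m.factorial : ℝ)

lemma q_zero (γ : ℝ) : q 0 γ = 1 := by simp [q]

lemma q_succ (m : ℕ) (γ : ℝ) : ((m : ℝ) + 1) * q (m + 1) γ = (γ + m) * q m γ := by
  have h1 : (m.factorial : ℝ) ≠ 0 := by positivity
  have h2 : (m : ℝ) + 1 ≠ 0 := by positivity
  simp only [q, Finset.prod_range_succ, Nat.factorial_succ]
  push_cast
  field_simp

lemma q_nonneg (m : ℕ) {γ : ℝ} (h : 0 ≤ γ) : 0 ≤ q m γ := by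
  unfold q; positivity

lemma q_neg (m : ℕ) {a : ℝ} (h0 : 0 ≤ a) (h1 : a ≤ 1) : q (m + 1) (-a) ≤ 0 := by
  unfold q
  apply div_nonpos_of_nonpos_of_nonneg _ (by positivity)
  rw [Finset.prod_range_succ']
  apply mul_nonpos_of_nonneg_of_nonpos
  · apply Finset.prod_nonneg
    intro i _
    have : (0 : ℝ) ≤ i := by positivity
    push_cast
    linarith
  · simpa using h0

lemma q_add (m : ℕ) (γ δ : ℝ) :
    ∑ p ∈ Finset.HasAntidiagonal.antidiagonal m, q p.1 γ * q p.2 δ = q m (γ + δ) := by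
  induction m with
  | zero => simp [q_zero]
  | succ m ih =>
    have h2 : (m : ℝ) + 1 ≠ 0 := by positivity
    apply mul_left_cancel₀ h2
    rw [q_succ, ← ih, Finset.mul_sum]
    have e : ∑ p ∈ Finset.HasAntidiagonal.antidiagonal (m + 1), ((m : ℝ) + 1) * (q p.1 γ * q p.2 δ)
        = ∑ p ∈ Finset.HasAntidiagonal.antidiagonal (m + 1), ((p.1 : ℝ) * q p.1 γ) * q p.2 δ
        + ∑ p ∈ Finset.HasAntidiagonal.antidiagonal (m + 1), q p.1 γ * ((p.2 : ℝ) * q p.2 δ) := by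
      rw [← Finset.sum_add_distrib]
      apply Finset.sum_congr rfl
      intro p hp
      have : (p.1 : ℝ) + p.2 = m + 1 := by exact_mod_cast Finset.HasAntidiagonal.mem_antidiagonal.mp hp
      rw [← this]; ring
    rw [e, Finset.Nat.sum_antidiagonal_succ, Finset.Nat.sum_antidiagonal_succ' (n := m)]
    simp only [Nat.cast_zero, zero_mul, mul_zero, zero_add, Nat.cast_add, Nat.cast_one, q_succ]
    rw [← Finset.sum_add_distrib, Finset.mul_sum]
    apply Finset.sum_congr rfl
    intro p hp
    have : (p.1 : ℝ) + p.2 = m := by exact_mod_cast Finset.HasAntidiagonal.mem_antidiagonal.mp hp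
    rw [← this]; ring

lemma q_summable (m : ℕ) {α β c : ℝ} (ha : 0 ≤ α) (hb : 0 ≤ β) (hc : |c| < 1) :
    Summable fun k : ℕ => c ^ k * q m (α * k + β) := by
  have h := (summable_pow_mul_geometric_of_norm_lt_one (R := ℝ) m (r := |c|) (by simpa using hc))
  have h2 := h.add (summable_pow_mul_geometric_of_norm_lt_one (R := ℝ) 0 (r := |c|) (by simpa using hc))
  refine Summable.of_norm_bounded (g := fun k : ℕ => (α + β + m) ^ m * ((k : ℝ) ^ m * |c| ^ k + (k : ℝ) ^ 0 * |c| ^ k)) (h2.mul_left _) ?_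
  intro k
  rw [norm_mul, norm_pow, Real.norm_eq_abs, Real.norm_of_nonneg (q_nonneg m (by positivity)), pow_zero, one_mul]
  have hq : q m (α * k + β) ≤ (α + β + m) ^ m * ((k : ℝ) ^ m + 1) := by
    have h1 : q m (α * k + β) ≤ ∏ j ∈ Finset.range m, (α * k + β + j) := by
      unfold q
      apply div_le_self (by positivity)
      exact_mod_cast Nat.succ_le_of_lt m.factorial_pos
    refine h1.trans ?_
    rcases Nat.eq_zero_or_pos k with rfl | hk
    · have : ∏ j ∈ Finset.range m, (α * (0:ℕ) + β + j) ≤ ∏ j ∈ Finset.range m, (α + β + m) := by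
        apply Finset.prod_le_prod
        · intros; positivity
        · intro j hj
          have : (j : ℝ) ≤ m := by exact_mod_cast (Finset.mem_range.mp hj).le
          simp; linarith
      refine this.trans ?_
      simp only [Finset.prod_const, Finset.card_range]
      apply le_mul_of_one_le_right (by positivity)
      simp
    · have : ∏ j ∈ Finset.range m, (α * k + β + j) ≤ ∏ j ∈ Finset.range m, ((α + β + m) * k) := by
        apply Finset.prod_le_prod
        · intros; positivity
        · intro j hj
          have h3 : (j : ℝ) ≤ m := by exact_mod_cast (Finset.mem_range.mp hj).le
          have h4 : (1 : ℝ) ≤ k := by exact_mod_cast hk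
          have : (0:ℝ) ≤ m := by positivity
          nlinarith
      refine this.trans ?_
      simp only [Finset.prod_const, Finset.card_range, mul_pow]
      gcongr
      simp
  calc |c| ^ k * q m (α * k + β) ≤ |c| ^ k * ((α + β + m) ^ m * ((k : ℝ) ^ m + 1)) := by gcongr
    _ = _ := by ring

noncomputable def G (α β : ℝ) (m : ℕ) (c : ℝ) : ℝ := ∑' k : ℕ, (-c) ^ k * q m (α * k + β)

set_option maxHeartbeats 2000000 in
lemma G_rec {α β c : ℝ} (ha : 0 ≤ α) (hb : 0 ≤ β) (hc0 : 0 ≤ c) (hc : c < 1) (m : ℕ) :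
    ∑ p ∈ Finset.HasAntidiagonal.antidiagonal m, q p.1 (-α) * G α β p.2 c = q m (β - α) - c * G α β m c := by
  have hs : ∀ n, Summable fun k : ℕ => (-c) ^ k * q n (α * k + β) := fun n =>
    q_summable n ha hb (by rw [abs_neg, abs_of_nonneg hc0]; exact hc)
  unfold G
  simp_rw [← tsum_mul_left]
  rw [← Summable.tsum_finsetSum (fun i _ => (hs i.2).mul_left _)]
  have e : ∀ k : ℕ, ∑ p ∈ Finset.HasAntidiagonal.antidiagonal m, q p.1 (-α) * ((-c) ^ k * q p.2 (α * k + β))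
      = (-c) ^ k * q m (-α + (α * k + β)) := by
    intro k
    rw [← q_add, Finset.mul_sum]
    exact Finset.sum_congr rfl fun p _ => by ring
  have e2 : ∀ k : ℕ, (-c) ^ (k + 1) * q m (-α + (α * ((k + 1 : ℕ) : ℝ) + β))
      = -(c * ((-c) ^ k * q m (α * k + β))) := by
    intro k
    have : -α + (α * ((k + 1 : ℕ) : ℝ) + β) = α * k + β := by push_cast; ring
    rw [this]; ring
  simp_rw [e]
  rw [Summable.tsum_eq_zero_add]
  · simp_rw [e2]
    rw [tsum_neg]
    simp
    ring_nf
  · rw [← summable_nat_add_iff 1]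
    simp_rw [e2]
    exact ((hs m).mul_left c).neg

lemma G_mono {α β c c' : ℝ} (ha : 0 ≤ α) (ha1 : α ≤ 1) (hb : α ≤ β) (hc0 : 0 ≤ c) (hcc : c ≤ c')
    (hc : c' < 1) (m : ℕ) : 0 ≤ G α β m c' ∧ G α β m c' ≤ G α β m c := by
  have hc0' := hc0.trans hcc
  have hb0 := ha.trans hb
  induction m using Nat.strong_induction_on with
  | _ m ih =>
    obtain ⟨S, S', h1, h2, h3, h4⟩ : ∃ S S' : ℝ, 0 ≤ S' ∧ S' ≤ S ∧
        (1 + c) * G α β m c = S ∧ (1 + c') * G α β m c' = S' := by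
      have r := G_rec ha hb0 hc0 (hcc.trans_lt hc) m
      have r' := G_rec ha hb0 hc0' hc m
      have hq : 0 ≤ q m (β - α) := q_nonneg m (by linarith)
      refine ⟨_, _, ?_, ?_, rfl, rfl⟩
      all_goals
        cases m with
        | zero => simp [q_zero] at r r'; linarith
        | succ n =>
          rw [Finset.Nat.sum_antidiagonal_succ] at r r'
          simp only [q_zero, one_mul] at r r'
          have hl : ∀ p ∈ Finset.HasAntidiagonal.antidiagonal n, p.2 < n + 1 := fun p hp => by
            have := Finset.HasAntidiagonal.mem_antidiagonal.mp hp; omega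
          have i1 : ∑ p ∈ Finset.HasAntidiagonal.antidiagonal n, q (p.1 + 1) (-α) * G α β p.2 c' ≤ 0 :=
            Finset.sum_nonpos fun p hp =>
              mul_nonpos_of_nonpos_of_nonneg (q_neg _ ha ha1) (ih _ (hl p hp)).1
          have i2 : ∑ p ∈ Finset.HasAntidiagonal.antidiagonal n, q (p.1 + 1) (-α) * G α β p.2 c ≤
              ∑ p ∈ Finset.HasAntidiagonal.antidiagonal n, q (p.1 + 1) (-α) * G α β p.2 c' :=
            Finset.sum_le_sum fun p hp =>
              mul_le_mul_of_nonpos_left (ih _ (hl p hp)).2 (q_neg _ ha ha1)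
          linarith
    have hg' : 0 ≤ G α β m c' := by
      by_contra hh
      push Not at hh
      nlinarith
    have hg : 0 ≤ G α β m c := by
      by_contra hh
      push Not at hh
      nlinarith
    refine ⟨hg', ?_⟩
    by_contra hh
    push Not at hh
    nlinarith

/-- reciprocal of the Euler sequence -/
noncomputable def P (γ : ℝ) (n : ℕ) : ℝ := ((n : ℝ) + 1) * q (n + 1) γ * (n : ℝ) ^ (-γ)

lemma P_eq (γ : ℝ) (n : ℕ) : P γ n = (Real.GammaSeq γ n)⁻¹ := by
  have h1 : (n.factorial : ℝ) ≠ 0 := by positivity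
  have h2 : (n : ℝ) + 1 ≠ 0 := by positivity
  unfold P q Real.GammaSeq
  rw [inv_div, Real.rpow_neg (by positivity), Nat.factorial_succ]
  push_cast
  rw [← mul_div_assoc, mul_div_mul_left _ _ h2, ← div_eq_mul_inv, div_div, mul_comm (n.factorial : ℝ)]

lemma P_tendsto {γ : ℝ} (h : 0 < γ) :
    Filter.Tendsto (P γ) Filter.atTop (nhds (1 / Real.Gamma γ)) := by
  have := (Real.GammaSeq_tendsto_Gamma γ).inv₀ (Real.Gamma_pos_of_pos h).ne'
  rw [one_div]
  exact this.congr fun n => (P_eq γ n).symm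

lemma P_nonneg {γ : ℝ} (h : 0 ≤ γ) (n : ℕ) : 0 ≤ P γ n := by
  have := q_nonneg (n + 1) h
  unfold P; positivity

lemma P_succ {γ : ℝ} (h : 0 ≤ γ) (n : ℕ) (hn : 1 ≤ n) : P γ (n + 1) ≤ P γ n := by
  have hq := q_nonneg (n + 1) h
  have hn0 : (0 : ℝ) < n := by exact_mod_cast hn
  have e := q_succ (n + 1) γ
  unfold P
  push_cast at e ⊢
  rw [e]
  have key : (1 + γ / (n + 1)) * ((n : ℝ) + 1) ^ (-γ) ≤ (n : ℝ) ^ (-γ) := by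
    have a1 : 1 + γ / (n + 1) ≤ Real.exp (γ / (n + 1)) := by
      have := Real.add_one_le_exp (γ / (n + 1)); linarith
    have a2 : 1 / ((n : ℝ) + 1) ≤ Real.log (n + 1) - Real.log n := by
      have := Real.one_sub_inv_le_log_of_pos (x := ((n : ℝ) + 1) / n) (by positivity)
      rw [Real.log_div (by positivity) (by positivity)] at this
      refine le_trans (le_of_eq ?_) this
      field_simp
      ring
    rw [Real.rpow_def_of_pos (by positivity), Real.rpow_def_of_pos hn0]
    calc _ ≤ Real.exp (γ / (n + 1)) * Real.exp (Real.log (n + 1) * -γ) := by gcongr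
      _ = Real.exp (γ * (1 / ((n : ℝ) + 1)) + Real.log (n + 1) * -γ) := by
        rw [← Real.exp_add]; ring_nf
      _ ≤ _ := by
        apply Real.exp_le_exp.mpr
        nlinarith
  have : (γ + (n + 1)) = (n + 1) * (1 + γ / (n + 1)) := by field_simp; ring
  calc (γ + ((n : ℝ) + 1)) * q (n + 1) γ * ((n : ℝ) + 1) ^ (-γ)
      = (n + 1) * q (n + 1) γ * ((1 + γ / (n + 1)) * ((n : ℝ) + 1) ^ (-γ)) := by rw [this]; ring
    _ ≤ _ := by gcongr

lemma P_anti {γ : ℝ} (h : 0 ≤ γ) {N n : ℕ} (hN : 1 ≤ N) (hn : N ≤ n) : P γ n ≤ P γ N := by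
  induction n, hn using Nat.le_induction with
  | base => rfl
  | succ n hn ih => exact (P_succ h n (hN.trans hn)).trans ih

lemma Gamma_le {γ : ℝ} (h : 0 < γ) {N : ℕ} (hN : 1 ≤ N) : 1 / Real.Gamma γ ≤ P γ N :=
  le_of_tendsto (P_tendsto h) (Filter.eventually_atTop.mpr ⟨N, fun _ hn => P_anti h.le hN hn⟩)

lemma P_term {α β x : ℝ} {n : ℕ} (hn : 1 ≤ n) (k : ℕ) :
    x ^ k * P (α * k + β) n =
      ((n : ℝ) + 1) * (n : ℝ) ^ (-β) * ((x * (n : ℝ) ^ (-α)) ^ k * q (n + 1) (α * k + β)) := by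
  have hn0 : (0 : ℝ) < n := by exact_mod_cast hn
  unfold P
  rw [neg_add, Real.rpow_add hn0, mul_pow, ← Real.rpow_natCast (_ ^ (-α)), ← Real.rpow_mul hn0.le]
  ring_nf

lemma exists_N {α : ℝ} (ha : 0 < α) (x : ℝ) :
    ∃ N : ℕ, 1 ≤ N ∧ ∀ n ≥ N, |x * (n : ℝ) ^ (-α)| < 1 := by
  have h := ((tendsto_rpow_neg_atTop ha).comp tendsto_natCast_atTop_atTop).const_mul x
  rw [mul_zero] at h
  have := (h.abs.eventually_lt_const (u := 1) (by simp))
  obtain ⟨N, hN⟩ := Filter.eventually_atTop.mp this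
  exact ⟨N + 1, by omega, fun n hn => hN n (by omega)⟩

lemma P_summable {α β x : ℝ} (ha : 0 ≤ α) (hb : 0 ≤ β) {n : ℕ} (hn : 1 ≤ n)
    (h : |x * (n : ℝ) ^ (-α)| < 1) : Summable fun k : ℕ => x ^ k * P (α * k + β) n := by
  simp_rw [P_term hn]
  exact (q_summable _ ha hb h).mul_left _

noncomputable def F (α β x : ℝ) : ℝ := ∑' k : ℕ, (-x) ^ k * (1 / Real.Gamma (α * k + β))

lemma F_summable {α β : ℝ} (ha : 0 < α) (hb : 0 < β) (x : ℝ) :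
    Summable fun k : ℕ => x ^ k * (1 / Real.Gamma (α * k + β)) := by
  obtain ⟨N, hN, h⟩ := exists_N ha |x|
  refine Summable.of_norm_bounded (P_summable (x := |x|) ha.le hb.le hN (h N le_rfl)) fun k => ?_
  have hp : 0 < α * k + β := by positivity
  have := Real.Gamma_pos_of_pos hp
  rw [norm_mul, norm_pow, Real.norm_eq_abs, Real.norm_of_nonneg (by positivity)]
  have := Gamma_le hp hN
  gcongr

lemma F_limit {α β : ℝ} (ha : 0 < α) (hb : 0 < β) (x : ℝ) :
    Filter.Tendsto (fun n : ℕ => ((n : ℝ) + 1) * (n : ℝ) ^ (-β) * G α β (n + 1) (x * (n : ℝ) ^ (-α)))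
      Filter.atTop (nhds (F α β x)) := by
  obtain ⟨N, hN, h⟩ := exists_N ha |x|
  have hd : Filter.Tendsto (fun n : ℕ => ∑' k : ℕ, (-x) ^ k * P (α * k + β) n) Filter.atTop
      (nhds (F α β x)) := by
    refine tendsto_tsum_of_dominated_convergence
      (P_summable (x := |x|) ha.le hb.le hN (h N le_rfl)) ?_ ?_
    · intro k
      exact (P_tendsto (by positivity)).const_mul _
    · filter_upwards [Filter.eventually_ge_atTop N] with n hn k
      have hp : 0 ≤ α * k + β := by positivity
      rw [norm_mul, norm_pow, norm_neg, Real.norm_eq_abs, Real.norm_of_nonneg (P_nonneg hp n)]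
      have := P_anti hp hN hn
      gcongr
  refine hd.congr' ?_
  filter_upwards [Filter.eventually_ge_atTop N] with n hn
  simp_rw [P_term (hN.trans hn)]
  rw [tsum_mul_left]
  unfold G
  simp

lemma F_mono {α β : ℝ} (ha : 0 < α) (ha1 : α ≤ 1) (hb : α ≤ β) {x y : ℝ} (hx : 0 ≤ x)
    (hxy : x ≤ y) : 0 ≤ F α β y ∧ F α β y ≤ F α β x := by
  have hb0 := ha.trans_le hb
  obtain ⟨N, hN, h⟩ := exists_N ha y
  have key : ∀ n ≥ N, 0 ≤ G α β (n + 1) (y * (n : ℝ) ^ (-α)) ∧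
      G α β (n + 1) (y * (n : ℝ) ^ (-α)) ≤ G α β (n + 1) (x * (n : ℝ) ^ (-α)) := fun n hn =>
    G_mono ha.le ha1 hb (by positivity) (by gcongr) (lt_of_abs_lt (h n hn)) (n + 1)
  constructor
  · refine ge_of_tendsto (F_limit ha hb0 y) ?_
    filter_upwards [Filter.eventually_ge_atTop N] with n hn
    have := (key n hn).1
    positivity
  · refine le_of_tendsto_of_tendsto (F_limit ha hb0 y) (F_limit ha hb0 x) ?_
    filter_upwards [Filter.eventually_ge_atTop N] with n hn
    have := (key n hn).2
    gcongr

lemma F_zero (α β : ℝ) : F α β 0 = 1 / Real.Gamma β := by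
  unfold F
  rw [tsum_eq_single 0]
  · simp
  · intro k hk; simp [hk]

lemma F_shift {α β : ℝ} (ha : 0 < α) (hb : 0 < β) (x : ℝ) :
    F α β x = 1 / Real.Gamma β - x * F α (β + α) x := by
  have e : ∀ k : ℕ, (-x) ^ (k + 1) * (1 / Real.Gamma (α * ((k + 1 : ℕ) : ℝ) + β))
      = -(x * ((-x) ^ k * (1 / Real.Gamma (α * k + (β + α))))) := by
    intro k
    have : α * ((k + 1 : ℕ) : ℝ) + β = α * k + (β + α) := by push_cast; ring
    rw [this]; ring
  unfold F
  rw [(F_summable ha hb (-x)).tsum_eq_zero_add]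
  simp_rw [e]
  rw [tsum_neg, tsum_mul_left]
  simp
  ring

lemma F_analytic {α β : ℝ} (ha : 0 < α) (hb : 0 < β) : AnalyticOnNhd ℝ (F α β) Set.univ := by
  set c : ℕ → ℝ := fun k => (-1) ^ k * (1 / Real.Gamma (α * k + β)) with hc
  set p := FormalMultilinearSeries.ofScalars ℝ c with hp
  have hr : p.radius = ⊤ := by
    apply FormalMultilinearSeries.radius_eq_top_of_summable_norm
    intro r
    have := (F_summable ha hb r).norm
    refine this.congr fun k => ?_
    rw [FormalMultilinearSeries.ofScalars_norm, hc]
    simp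
    ring
  have h := (p.hasFPowerSeriesOnBall (by rw [hr]; simp)).analyticOnNhd
  rw [hr] at h
  have e : p.sum = F α β := by
    funext x
    have := congrFun (FormalMultilinearSeries.ofScalarsSum_eq_tsum (E := ℝ) c) x
    change FormalMultilinearSeries.ofScalarsSum c x = _
    rw [this]
    unfold F
    refine tsum_congr fun k => ?_
    rw [hc, smul_eq_mul, neg_pow x]
    ring
  rw [← e]
  simpa using h

lemma F_deriv {α β : ℝ} (ha : 0 < α) (hb : 0 < β) (x : ℝ) :
    HasDerivAt (F α β) (∑' k : ℕ, -(k * (-x) ^ (k - 1)) * (1 / Real.Gamma (α * k + β))) x := by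
  set R := |x| + 1 with hR
  have hR1 : 1 ≤ R := by have := abs_nonneg x; linarith
  have hx : x ∈ Set.Ioo (-R) R := by rw [Set.mem_Ioo, ← abs_lt]; linarith
  have h0 : Summable fun k : ℕ => (-x) ^ k * (1 / Real.Gamma (α * k + β)) := F_summable ha hb (-x)
  have hu := F_summable ha hb (2 * R)
  refine hasDerivAt_tsum_of_isPreconnected
    (g := fun (k : ℕ) (y : ℝ) => (-y) ^ k * (1 / Real.Gamma (α * k + β)))
    (g' := fun (k : ℕ) (y : ℝ) => -(k * (-y) ^ (k - 1)) * (1 / Real.Gamma (α * k + β)))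
    hu isOpen_Ioo isPreconnected_Ioo ?_ ?_ hx h0 hx
  · intro k y _
    have := ((hasDerivAt_neg y).pow k).mul_const (1 / Real.Gamma (α * k + β))
    refine this.congr_deriv ?_
    ring
  · intro k y hy
    have hy' : |y| ≤ R := (abs_lt.mpr hy).le
    have hp : 0 < α * k + β := by positivity
    have := Real.Gamma_pos_of_pos hp
    rw [norm_mul, Real.norm_of_nonneg (by positivity : 0 ≤ 1 / Real.Gamma (α * k + β))]
    gcongr
    rw [norm_neg, norm_mul, norm_pow, norm_neg, Real.norm_eq_abs, Real.norm_eq_abs, Nat.abs_cast, mul_pow]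
    have h1 : (k : ℝ) ≤ 2 ^ k := by exact_mod_cast Nat.lt_two_pow_self.le
    have h2 : |y| ^ (k - 1) ≤ R ^ k :=
      (pow_le_pow_left₀ (abs_nonneg y) hy' _).trans (pow_le_pow_right₀ hR1 (by omega))
    gcongr

lemma F_le {α β : ℝ} (ha : 0 < α) (ha1 : α ≤ 1) (hb : α ≤ β) {x : ℝ} (hx : 0 < x) :
    F α β x ≤ β * F α (β + 1) x := by
  have hb0 := ha.trans_le hb
  have hb1 : 0 < β + 1 := by linarith
  have hd := F_deriv ha hb1 x
  set D := ∑' k : ℕ, -(k * (-x) ^ (k - 1)) * (1 / Real.Gamma (α * k + (β + 1))) with hD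
  have hD0 : D ≤ 0 := by
    rw [← hd.deriv]
    have hanti : AntitoneOn (F α (β + 1)) (Set.Ioi 0) := fun a h b _ hab =>
      (F_mono ha ha1 (by linarith) (le_of_lt h) hab).2
    have := hanti.derivWithin_nonpos (x := x)
    rwa [derivWithin_of_mem_nhds (Ioi_mem_nhds hx)] at this
  have e : F α β x = β * F α (β + 1) x + α * (x * D) := by
    have hs := F_summable ha hb1 (-x)
    have hs0 := F_summable ha hb0 (-x)
    have t : ∀ k : ℕ, (-x) ^ k * (1 / Real.Gamma (α * k + β)) =
        β * ((-x) ^ k * (1 / Real.Gamma (α * k + (β + 1)))) +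
        α * (x * (-(k * (-x) ^ (k - 1)) * (1 / Real.Gamma (α * k + (β + 1))))) := by
      intro k
      have hp : 0 < α * k + β := by positivity
      have hG := Real.Gamma_pos_of_pos hp
      rw [← add_assoc, Real.Gamma_add_one hp.ne']
      cases k with
      | zero => simp at hG ⊢; field_simp
      | succ k =>
        simp only [Nat.add_sub_cancel]
        field_simp
        ring
    have hs2 : Summable fun k : ℕ =>
        α * (x * (-(k * (-x) ^ (k - 1)) * (1 / Real.Gamma (α * k + (β + 1))))) := by
      refine (hs0.sub (hs.mul_left β)).congr fun k => ?_
      rw [t k]; ring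
    rw [hD]
    unfold F
    rw [← tsum_mul_left, ← tsum_mul_left, ← tsum_mul_left, ← (hs.mul_left β).tsum_add hs2]
    exact tsum_congr t
  have : α * (x * D) ≤ 0 :=
    mul_nonpos_of_nonneg_of_nonpos ha.le (mul_nonpos_of_nonneg_of_nonpos hx.le hD0)
  linarith

lemma F_tendsto {α β : ℝ} (ha : 0 < α) (ha1 : α ≤ 1) (hb : α ≤ β) :
    Filter.Tendsto (F α β) Filter.atTop (nhds 0) := by
  have hb0 := ha.trans_le hb
  have hlim : Filter.Tendsto (fun x : ℝ => β * (1 / Real.Gamma (β + 1 - α)) * x⁻¹)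
      Filter.atTop (nhds 0) := by
    simpa using tendsto_inv_atTop_zero.const_mul (β * (1 / Real.Gamma (β + 1 - α)))
  refine tendsto_of_tendsto_of_tendsto_of_le_of_le' tendsto_const_nhds hlim ?_ ?_
  · filter_upwards [Filter.eventually_gt_atTop 0] with x hx
    exact (F_mono ha ha1 hb hx.le le_rfl).1
  · filter_upwards [Filter.eventually_gt_atTop 0] with x hx
    have h1 := F_le ha ha1 hb hx
    have h2 := F_shift ha (β := β + 1 - α) (by linarith) x
    have h3 := (F_mono ha ha1 (β := β + 1 - α) (by linarith) hx.le le_rfl).1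
    rw [sub_add_cancel] at h2
    have h4 : F α (β + 1) x ≤ (1 / Real.Gamma (β + 1 - α)) * x⁻¹ := by
      rw [← div_eq_mul_inv, le_div_iff₀ hx]; linarith
    calc _ ≤ _ := h1
      _ ≤ _ := by rw [mul_assoc]; gcongr

lemma F_strict {α β : ℝ} (ha : 0 < α) (ha1 : α ≤ 1) (hb : α ≤ β) :
    StrictAntiOn (F α β) (Set.Ici 0) := by
  have hb0 := ha.trans_le hb
  intro x hx y hy hxy
  refine lt_of_le_of_ne (F_mono ha ha1 hb hx hxy.le).2 fun heq => ?_
  have hev : F α β =ᶠ[nhds ((x + y) / 2)] fun _ => F α β y := by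
    filter_upwards [Ioo_mem_nhds (show x < (x + y) / 2 by linarith) (show (x + y) / 2 < y by linarith)]
      with z hz
    have hx0 : 0 ≤ x := hx
    have h1 := (F_mono ha ha1 hb hx hz.1.le).2
    have h2 := (F_mono ha ha1 hb (hx0.trans hz.1.le) hz.2.le).2
    linarith
  have hc : F α β = fun _ => F α β y :=
    (F_analytic ha hb0).eq_of_eventuallyEq analyticOnNhd_const hev
  have ht := F_tendsto ha ha1 hb
  have h0 : F α β 0 = F α β y := by rw [hc]
  rw [hc] at ht
  have h1 := tendsto_nhds_unique tendsto_const_nhds ht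
  rw [← h0, F_zero] at h1
  have := Real.Gamma_pos_of_pos hb0
  have : 0 < 1 / Real.Gamma β := by positivity
  linarith

end ML

theorem mittagLeffler_strictAnti_bijOn
    (α β : ℝ) (hα0 : 0 < α) (hα1 : α ≤ 1) (hβ : α ≤ β)
    (f : ℝ → ℝ) (hf : f = fun x => ∑' k : ℕ, (-x) ^ k / Real.Gamma (α * k + β)) :
    StrictAntiOn f (Set.Ici 0) ∧
      f 0 = 1 / Real.Gamma β ∧
      Filter.Tendsto f Filter.atTop (nhds 0) ∧
      Set.BijOn f (Set.Ici 0) (Set.Ioc 0 (1 / Real.Gamma β)) := by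
  have hfF : f = ML.F α β := by
    rw [hf]; funext x; unfold ML.F
    exact tsum_congr fun k => by rw [div_eq_mul_one_div]
  rw [hfF]
  have hs := ML.F_strict hα0 hα1 hβ
  have h0 := ML.F_zero α β
  have ht := ML.F_tendsto hα0 hα1 hβ
  have hcont : Continuous (ML.F α β) :=
    continuousOn_univ.mp (ML.F_analytic hα0 (hα0.trans_le hβ)).continuousOn
  refine ⟨hs, h0, ht, ?_, hs.injOn, ?_⟩
  · intro x hx
    have hx0 : (0 : ℝ) ≤ x := hx
    constructor
    · have h1 := (ML.F_mono hα0 hα1 hβ (x := x + 1) (y := x + 1) (by linarith) le_rfl).1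
      have h2 := hs hx (show x + 1 ∈ Set.Ici (0 : ℝ) from by simp; linarith) (by linarith)
      linarith
    · rw [← h0]
      exact (ML.F_mono hα0 hα1 hβ le_rfl hx0).2
  · intro y hy
    obtain ⟨b, hb0, hb⟩ := ((Filter.eventually_ge_atTop 0).and (ht.eventually_lt_const hy.1)).exists
    have := intermediate_value_Icc' hb0 hcont.continuousOn (f := ML.F α β)
    obtain ⟨x, hx, hxy⟩ := this ⟨hb.le, by rw [h0]; exact hy.2⟩
    exact ⟨x, hx.1, hxy⟩
end

section
/- Let δ > 0 and let A be the 2×2 real matrix A = [[0, 1], [−1, −δ^{1/2}]], and let e₂ = (0, 1)ᵀ. Define U(t) = t^{1/2} · E_{1/2, 3/2}(A t^{1/2}) · e₂ for t ≥ 0, where E_{1/2,3/2} of the matrix B is the convergent series ∑_{k=0}^∞ B^k / Γ(k/2 + 3/2). Then U(0) = 0 and, for every t > 0, each component of U satisfies the Caputo half-order system D^{1/2} U(t) = A U(t) + e₂; that is, componentwise (1/Γ(1/2)) ∫₀ᵗ (t − s)^{−1/2} U_i'(s) ds = (A U(t) + e₂)_i for i = 1, 2. (Exact solution of the Basset problem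 rewritten as a system.) -/
lemma aux_hasSum_congr {f g : ℕ → ℝ} {a : ℝ} (h : HasSum f a) (e : ∀ k, g k = f k) :
    HasSum g a := by
  have : g = f := funext e
  rw [this]; exact h

open Filter Topology MeasureTheory in
lemma aux_gamma_summable (M : ℝ) (hM : 0 < M) :
    Summable (fun k : ℕ => M ^ k / Real.Gamma ((k : ℝ) / 2 + 1 / 2)) := by
  have key : ∀ a : ℝ, 0 < a → Summable (fun n : ℕ => M ^ (2 * n) / Real.Gamma ((n : ℝ) + a)) := by
    intro a ha
    have hg : ∀ n : ℕ, 0 < Real.Gamma ((n : ℝ) + a) := fun n =>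
      Real.Gamma_pos_of_pos (by positivity)
    refine summable_of_ratio_test_tendsto_lt_one (l := 0) zero_lt_one ?_ ?_
    · exact Eventually.of_forall fun n => (div_pos (by positivity) (hg n)).ne'
    · have h1 : Tendsto (fun n : ℕ => M ^ 2 / ((n : ℝ) + a)) atTop (𝓝 0) :=
        (tendsto_const_nhds (x := M ^ 2)).div_atTop
          (tendsto_atTop_add_const_right _ _ tendsto_natCast_atTop_atTop)
      refine h1.congr fun n => ?_
      have hn : (n : ℝ) + a ≠ 0 := by positivity
      have e : Real.Gamma (((n + 1 : ℕ) : ℝ) + a) = ((n : ℝ) + a) * Real.Gamma ((n : ℝ) + a) := by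
        rw [← Real.Gamma_add_one hn]; congr 1; push_cast; ring
      rw [Real.norm_of_nonneg (div_pos (by positivity) (hg _)).le,
        Real.norm_of_nonneg (div_pos (by positivity) (hg _)).le, e]
      have := (hg n).ne'
      field_simp
      ring
  refine Summable.even_add_odd ?_ ?_
  · convert key (1 / 2) (by norm_num) using 4
    push_cast; ring
  · refine (summable_congr fun n => ?_).2 ((key 1 (by norm_num)).mul_left M)
    have : ((2 * n + 1 : ℕ) : ℝ) / 2 + 1 / 2 = n + 1 := by push_cast; ring
    rw [this]; ring

lemma aux_gamma_summable_one (M : ℝ) (hM : 0 < M) :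
    Summable (fun k : ℕ => M ^ k / Real.Gamma ((k : ℝ) / 2 + 1)) := by
  refine (summable_congr fun k => ?_).2
    (((summable_nat_add_iff 1).2 (aux_gamma_summable M hM)).mul_left M⁻¹)
  have : ((k + 1 : ℕ) : ℝ) / 2 + 1 / 2 = k / 2 + 1 := by push_cast; ring
  rw [this, pow_succ]; field_simp

lemma aux_gamma_summable_three (M : ℝ) (hM : 0 < M) :
    Summable (fun k : ℕ => M ^ k / Real.Gamma ((k : ℝ) / 2 + 3 / 2)) := by
  refine (summable_congr fun k => ?_).2
    (((summable_nat_add_iff 1).2 (aux_gamma_summable_one M hM)).mul_left M⁻¹)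
  have : ((k + 1 : ℕ) : ℝ) / 2 + 1 = k / 2 + 3 / 2 := by push_cast; ring
  rw [this, pow_succ]; field_simp

lemma aux_beta (t b : ℝ) (ht : 0 < t) (hb : 0 < b) :
    ∫ s in (0 : ℝ)..t, (t - s) ^ (-(1 / 2) : ℝ) * s ^ (b - 1) =
      Real.Gamma (1 / 2) * Real.Gamma b / Real.Gamma (b + 1 / 2) * t ^ (b - 1 / 2) := by
  have h := Complex.betaIntegral_scaled (b : ℂ) ((1 / 2 : ℝ) : ℂ) ht
  rw [Complex.betaIntegral_eq_Gamma_mul_div _ _ (by simpa using hb) (by simp)] at h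
  rw [← Complex.ofReal_inj, ← intervalIntegral.integral_ofReal]
  have e1 : ∫ s in (0 : ℝ)..t, (((t - s) ^ (-(1 / 2) : ℝ) * s ^ (b - 1) : ℝ) : ℂ) =
      ∫ x in (0 : ℝ)..t, (x : ℂ) ^ ((b : ℂ) - 1) * ((t : ℂ) - x) ^ (((1 / 2 : ℝ) : ℂ) - 1) := by
    refine intervalIntegral.integral_congr fun x hx => ?_
    rw [Set.uIcc_of_le ht.le] at hx
    rw [Complex.ofReal_mul, Complex.ofReal_cpow (sub_nonneg.2 hx.2), Complex.ofReal_cpow hx.1,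
      mul_comm]
    push_cast
    congr 2
    norm_num
  rw [e1, h, ← Complex.ofReal_add, Complex.Gamma_ofReal, Complex.Gamma_ofReal,
    Complex.Gamma_ofReal, ← Complex.ofReal_one, ← Complex.ofReal_sub, ← Complex.ofReal_cpow ht.le]
  have : b + 1 / 2 - 1 = b - 1 / 2 := by ring
  rw [this]
  push_cast
  ring

open MeasureTheory in
lemma aux_scalar (c : ℕ → ℝ) (M : ℝ) (hM : 0 < M) (hc : ∀ k, |c k| ≤ M ^ k)
    (f : ℝ → ℝ) (hf : ∀ s, 0 < s → f s =
      √s * ∑' k : ℕ, (Real.Gamma ((k : ℝ) / 2 + 3 / 2))⁻¹ * (√s ^ k * c k))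
    (t : ℝ) (ht : 0 < t) :
    HasSum (fun k : ℕ => (Real.Gamma ((k : ℝ) / 2 + 1))⁻¹ * (√t ^ k * c k))
     ((1 / Real.Gamma (1 / 2)) *
       ∫ s in (0 : ℝ)..t, (t - s) ^ (-(1 / 2) : ℝ) * deriv f s) := by
  have hg1 : ∀ k : ℕ, 0 < Real.Gamma ((k : ℝ) / 2 + 1 / 2) := fun k =>
    Real.Gamma_pos_of_pos (by positivity)
  have hg2 : ∀ k : ℕ, 0 < Real.Gamma ((k : ℝ) / 2 + 1) := fun k =>
    Real.Gamma_pos_of_pos (by positivity)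
  have hg3 : ∀ k : ℕ, Real.Gamma ((k : ℝ) / 2 + 3 / 2) =
      ((k : ℝ) / 2 + 1 / 2) * Real.Gamma ((k : ℝ) / 2 + 1 / 2) := fun k => by
    rw [← Real.Gamma_add_one (by positivity)]; congr 1; ring
  have hh : 0 < Real.Gamma (1 / 2) := Real.Gamma_pos_of_pos (by norm_num)
  -- summability of the differentiated series
  have hbs : ∀ R : ℝ, 0 < R →
      Summable (fun k : ℕ => 2 * |c k / Real.Gamma ((k : ℝ) / 2 + 1 / 2)| * R ^ k) := by
    intro R hR
    refine Summable.of_nonneg_of_le (fun k => by positivity) (fun k => ?_)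
      ((aux_gamma_summable (M * R) (by positivity)).mul_left 2)
    rw [abs_div, abs_of_pos (hg1 k), mul_pow, mul_assoc, div_mul_eq_mul_div]
    have := hg1 k
    have := hc k
    gcongr
  -- derivative
  have hd : ∀ s, 0 < s → deriv f s =
      ∑' k : ℕ, c k / Real.Gamma ((k : ℝ) / 2 + 1 / 2) * s ^ (((k : ℝ) / 2 + 1 / 2) - 1) := by
    intro s hs
    have hF : HasDerivAt (fun x : ℝ => ∑' k : ℕ,
          2 * (c k / Real.Gamma ((k : ℝ) / 2 + 1 / 2)) * (x ^ (k + 1) / ((k : ℝ) + 1)))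
        (∑' k : ℕ, 2 * (c k / Real.Gamma ((k : ℝ) / 2 + 1 / 2)) * √s ^ k) (√s) := by
      have hss : 0 < √s := Real.sqrt_pos.2 hs
      refine hasDerivAt_tsum_of_isPreconnected (t := Metric.ball (0 : ℝ) (√s + 1)) (y₀ := 0)
        (hbs (√s + 1) (by positivity)) Metric.isOpen_ball
        (convex_ball _ _).isPreconnected
        (g' := fun k y => 2 * (c k / Real.Gamma ((k : ℝ) / 2 + 1 / 2)) * y ^ k) ?_ ?_ ?_ ?_ ?_
      · intro k y _
        have h1 := ((hasDerivAt_pow (k + 1) y).div_const ((k : ℝ) + 1)).const_mul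
          (2 * (c k / Real.Gamma ((k : ℝ) / 2 + 1 / 2)))
        have : (k : ℝ) + 1 ≠ 0 := by positivity
        have e : y ^ k = ((k + 1 : ℕ) : ℝ) * y ^ (k + 1 - 1) / ((k : ℝ) + 1) := by
          push_cast
          field_simp
        rw [e]
        exact h1
      · intro k y hy
        rw [mem_ball_zero_iff] at hy
        rw [norm_mul, norm_mul, norm_pow, Real.norm_eq_abs (c k / _)]
        have : ‖(2 : ℝ)‖ = 2 := by norm_num
        rw [this]
        gcongr
      · simp; positivity
      · simp [summable_zero]
      · rw [mem_ball_zero_iff, Real.norm_of_nonneg hss.le]; linarith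
    have hcomp := hF.comp s (Real.hasDerivAt_sqrt hs.ne')
    have heq : f =ᶠ[nhds s] ((fun x : ℝ => ∑' k : ℕ,
          2 * (c k / Real.Gamma ((k : ℝ) / 2 + 1 / 2)) * (x ^ (k + 1) / ((k : ℝ) + 1))) ∘
            fun x => √x) := by
      filter_upwards [lt_mem_nhds hs] with y hy
      rw [hf y hy, Function.comp, ← tsum_mul_left]
      refine tsum_congr fun k => ?_
      rw [hg3]
      have := (hg1 k).ne'
      have : (k : ℝ) / 2 + 1 / 2 ≠ 0 := by positivity
      have : (k : ℝ) + 1 ≠ 0 := by positivity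
      field_simp
      ring
    rw [heq.deriv_eq, hcomp.deriv, ← tsum_mul_right]
    refine tsum_congr fun k => ?_
    have hp : s ^ (((k : ℝ) / 2 + 1 / 2) - 1) = √s ^ k / √s := by
      rw [Real.sqrt_eq_rpow, ← Real.rpow_natCast, ← Real.rpow_mul hs.le, ← Real.rpow_sub hs]
      congr 1; ring
    rw [hp]
    have : √s ≠ 0 := (Real.sqrt_pos.2 hs).ne'
    have := (hg1 k).ne'
    field_simp
  -- termwise integrals
  have hI : ∀ k : ℕ, ∫ s in Set.Ioc (0 : ℝ) t,
      (t - s) ^ (-(1 / 2) : ℝ) * s ^ (((k : ℝ) / 2 + 1 / 2) - 1) =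
      Real.Gamma (1 / 2) * Real.Gamma ((k : ℝ) / 2 + 1 / 2) / Real.Gamma ((k : ℝ) / 2 + 1)
        * √t ^ k := by
    intro k
    rw [← intervalIntegral.integral_of_le ht.le, aux_beta t _ ht (by positivity)]
    have e : (k : ℝ) / 2 + 1 / 2 + 1 / 2 = k / 2 + 1 := by ring
    rw [e, Real.sqrt_eq_rpow, ← Real.rpow_natCast, ← Real.rpow_mul ht.le]
    congr 2; ring
  have hst : 0 < √t := Real.sqrt_pos.2 ht
  have hInt : ∀ k : ℕ, IntegrableOn
      (fun s => (t - s) ^ (-(1 / 2) : ℝ) * s ^ (((k : ℝ) / 2 + 1 / 2) - 1))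
      (Set.Ioc (0 : ℝ) t) := by
    intro k
    refine Integrable.of_integral_ne_zero ?_
    rw [hI]
    have := hg1 k
    have := hg2 k
    positivity
  set G : ℕ → ℝ → ℝ := fun k s => c k / Real.Gamma ((k : ℝ) / 2 + 1 / 2) *
    ((t - s) ^ (-(1 / 2) : ℝ) * s ^ (((k : ℝ) / 2 + 1 / 2) - 1)) with hG
  have hGn : ∀ k, ∫ s in Set.Ioc (0 : ℝ) t, ‖G k s‖ =
      Real.Gamma (1 / 2) * ((Real.Gamma ((k : ℝ) / 2 + 1))⁻¹ * (√t ^ k * |c k|)) := by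
    intro k
    have : ∫ s in Set.Ioc (0 : ℝ) t, ‖G k s‖ = ∫ s in Set.Ioc (0 : ℝ) t,
        |c k| / Real.Gamma ((k : ℝ) / 2 + 1 / 2) *
        ((t - s) ^ (-(1 / 2) : ℝ) * s ^ (((k : ℝ) / 2 + 1 / 2) - 1)) := by
      refine setIntegral_congr_fun measurableSet_Ioc fun s hs => ?_
      simp only [hG]
      rw [norm_mul, Real.norm_eq_abs, abs_div, abs_of_pos (hg1 k), Real.norm_of_nonneg]
      exact mul_nonneg (Real.rpow_nonneg (sub_nonneg.2 hs.2) _) (Real.rpow_nonneg hs.1.le _)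
    rw [this, integral_const_mul, hI]
    have := (hg1 k).ne'
    field_simp
  have hsum : Summable fun k => ∫ s in Set.Ioc (0 : ℝ) t, ‖G k s‖ := by
    simp_rw [hGn]
    refine Summable.mul_left _ ?_
    refine Summable.of_nonneg_of_le (fun k => ?_) (fun k => ?_)
      (aux_gamma_summable_one (√t * M) (by positivity))
    · have := hg2 k
      positivity
    · have := hg2 k
      have := hc k
      rw [mul_pow, div_eq_inv_mul (_ * _)]
      exact mul_le_mul_of_nonneg_left (mul_le_mul_of_nonneg_left (hc k) (pow_pos hst k).le)
        (inv_pos.2 (hg2 k)).le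
  have hmain := hasSum_integral_of_summable_integral_norm
    (fun k => (hInt k).const_mul (c k / Real.Gamma ((k : ℝ) / 2 + 1 / 2))) hsum
  have hfin : ∫ s in (0 : ℝ)..t, (t - s) ^ (-(1 / 2) : ℝ) * deriv f s =
      ∫ s in Set.Ioc (0 : ℝ) t, ∑' k, G k s := by
    rw [intervalIntegral.integral_of_le ht.le]
    refine setIntegral_congr_fun measurableSet_Ioc fun s hs => ?_
    simp only [hG]
    rw [hd s hs.1, ← tsum_mul_left]
    exact tsum_congr fun k => by ring
  rw [hfin]
  have hm := hmain.mul_left (1 / Real.Gamma (1 / 2))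
  refine aux_hasSum_congr hm fun k => ?_
  rw [integral_const_mul, hI]
  have := (hg1 k).ne'
  field_simp

/-- Exact solution of the Basset problem rewritten as a half-order system:
`U(t) = t^{1/2} E_{1/2,3/2}(A t^{1/2}) e₂` satisfies `U(0) = 0` and, componentwise,
`D^{1/2} U(t) = A U(t) + e₂` for `t > 0`. -/
theorem basset_system_exact_solution
    (δ : ℝ) (hδ : 0 < δ)
    (A : Matrix (Fin 2) (Fin 2) ℝ) (hA : A = !![0, 1; -1, -Real.sqrt δ])
    (e₂ : Fin 2 → ℝ) (he : e₂ = ![0, 1])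
    (U : ℝ → Fin 2 → ℝ)
    (hU : ∀ t : ℝ, U t = t ^ ((1 : ℝ) / 2) •
        (∑' k : ℕ, (Real.Gamma ((k : ℝ) / 2 + 3 / 2))⁻¹ •
          (t ^ ((1 : ℝ) / 2) • A) ^ k).mulVec e₂) :
    U 0 = 0 ∧
      ∀ t : ℝ, 0 < t → ∀ i : Fin 2,
        (1 / Real.Gamma (1 / 2)) *
            (∫ s in (0 : ℝ)..t, (t - s) ^ (-(1 / 2) : ℝ) * deriv (fun s => U s i) s)
          = (A.mulVec (U t) + e₂) i := by
  refine ⟨by rw [hU]; simp, ?_⟩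
  have hM : (0 : ℝ) < 1 + √δ := by positivity
  have hb : ∀ (k : ℕ) (i j : Fin 2), |(A ^ k) i j| ≤ (1 + √δ) ^ k := by
    intro k
    induction k with
    | zero => intro i j; fin_cases i <;> fin_cases j <;> simp
    | succ k ih =>
      intro i j
      have h0 := ih 0 j
      have h1 := ih 1 j
      have hs := Real.sqrt_nonneg δ
      have hk : (0 : ℝ) ≤ (1 + √δ) ^ k := by positivity
      rw [pow_succ' A, Matrix.mul_apply, Fin.sum_univ_two, pow_succ (1 + √δ)]
      fin_cases i
      · simp [hA]
        rw [hA] at h1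
        nlinarith
      · simp only [hA] at h0 h1 ⊢
        simp
        rw [abs_le] at h0 h1 ⊢
        constructor <;> nlinarith
  have hS : ∀ s : ℝ, 0 < s → ∀ i : Fin 2,
      HasSum (fun k : ℕ => (Real.Gamma ((k : ℝ) / 2 + 3 / 2))⁻¹ * (√s ^ k * (A ^ k) i 1))
        ((∑' k : ℕ, (Real.Gamma ((k : ℝ) / 2 + 3 / 2))⁻¹ •
          (s ^ ((1 : ℝ) / 2) • A) ^ k) i 1) := by
    intro s hs
    have hss : 0 < √s := Real.sqrt_pos.2 hs
    have hsm : Summable (fun k : ℕ => (Real.Gamma ((k : ℝ) / 2 + 3 / 2))⁻¹ •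
          (s ^ ((1 : ℝ) / 2) • A) ^ k) := by
      refine Pi.summable.2 fun i => Pi.summable.2 fun j => ?_
      refine Summable.of_norm_bounded (aux_gamma_summable_three (√s * (1 + √δ)) (by positivity)) ?_
      intro k
      have hg : 0 < Real.Gamma ((k : ℝ) / 2 + 3 / 2) := Real.Gamma_pos_of_pos (by positivity)
      rw [← Real.sqrt_eq_rpow, smul_pow, Matrix.smul_apply, Matrix.smul_apply, smul_eq_mul,
        smul_eq_mul, norm_mul, norm_mul, Real.norm_of_nonneg (inv_pos.2 hg).le,
        Real.norm_of_nonneg (pow_pos hss k).le, Real.norm_eq_abs, mul_pow, div_eq_inv_mul (_ * _)]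
      exact mul_le_mul_of_nonneg_left (mul_le_mul_of_nonneg_left (hb k i j) (pow_pos hss k).le)
        (inv_pos.2 hg).le
    intro i
    have h := Pi.hasSum.1 (Pi.hasSum.1 hsm.hasSum i) 1
    convert h using 2 with k
    rw [← Real.sqrt_eq_rpow, smul_pow, Matrix.smul_apply, Matrix.smul_apply, smul_eq_mul,
        smul_eq_mul]
  have hUi : ∀ s : ℝ, 0 < s → ∀ i : Fin 2, U s i = √s * ∑' k : ℕ,
      (Real.Gamma ((k : ℝ) / 2 + 3 / 2))⁻¹ * (√s ^ k * (A ^ k) i 1) := by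
    intro s hs i
    rw [(hS s hs i).tsum_eq, hU, Pi.smul_apply, smul_eq_mul, ← Real.sqrt_eq_rpow, he]
    simp [Matrix.mulVec, dotProduct, Fin.sum_univ_two]
  intro t ht i
  have h1 := aux_scalar (fun k => (A ^ k) i 1) (1 + √δ) hM (fun k => hb k i 1) (fun s => U s i)
    (fun s hs => hUi s hs i) t ht
  have hUs : ∀ j : Fin 2, HasSum (fun k : ℕ => √t * ((Real.Gamma ((k : ℝ) / 2 + 3 / 2))⁻¹ *
      (√t ^ k * (A ^ k) j 1))) (U t j) := by
    intro j
    rw [hUi t ht j, (hS t ht j).tsum_eq]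
    exact (hS t ht j).mul_left _
  have h2 := ((hUs 0).mul_left (A i 0)).add ((hUs 1).mul_left (A i 1))
  refine h1.unique ?_
  rw [← hasSum_nat_add_iff' 1]
  have e2 : (A.mulVec (U t) + e₂) i - ∑ k ∈ Finset.range 1,
      (Real.Gamma ((k : ℝ) / 2 + 1))⁻¹ * (√t ^ k * (A ^ k) i 1) =
      A i 0 * U t 0 + A i 1 * U t 1 := by
    simp only [Finset.sum_range_one, he]
    fin_cases i <;> simp [Matrix.mulVec, dotProduct, Fin.sum_univ_two]
  rw [e2]
  refine aux_hasSum_congr h2 fun k => ?_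
  · have e : ((k + 1 : ℕ) : ℝ) / 2 + 1 = k / 2 + 3 / 2 := by push_cast; ring
    rw [e, pow_succ' A, Matrix.mul_apply, Fin.sum_univ_two]
    ring
end
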